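/- Let θ : ℝⁿ → [−∞,+∞] be symmetric and locally Lipschitz continuous relative to its domain, and let g = θ∘λ be the associated spectral function. Assume: Y is a proximal subgradient of g at X; θ is parabolically epi-differentiable at λ(X) for λ'(X;H) for every H ∈ T_{dom g}(X); g is subdifferentially regular at X; and Y = U·Diag(y)·Uᵀ for some y ∈ ∂̂θ(λ(X)) and U ∈ Oⁿ(X). Then g is generalized twice differentiable at X for Y if and only if θ is generalized twice differentiable at λ(X) for y. -/

import Mathlib

open Filter Topology Matrix

noncomputable section

namespace SpecPaper

/-! ## Generic variational analysis definitions over a topological real vector space -/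

variable {E : Type*}

section Generic

variable [AddCommGroup E] [Module ℝ E] [TopologicalSpace E]

/-- `f x` is finite (neither `+∞` nor `-∞`). -/
def IsFiniteAt (f : E → EReal) (x : E) : Prop :=
  f x ≠ ⊤ ∧ f x ≠ ⊥

/-- The norm induced by a given inner product. -/
noncomputable def nrm (ip : E → E → ℝ) (x : E) : ℝ :=
  Real.sqrt (ip x x)

/-- The subderivative `df(x)(w)`. -/
noncomputable def subderiv (f : E → EReal) (x w : E) : EReal :=
  Filter.liminf (fun p : ℝ × E => (((p.1)⁻¹ : ℝ) : EReal) * (f (x + p.1 • p.2) - f x))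
    ((nhdsWithin (0 : ℝ) (Set.Ioi 0)) ×ˢ nhds w)

/-- The second-order difference quotient `Δ²ₜ f(x,v)(w)`. -/
noncomputable def sdq2 (ip : E → E → ℝ) (f : E → EReal) (x v : E) (t : ℝ) (w : E) : EReal :=
  (((2 / t ^ 2) : ℝ) : EReal) * (f (x + t • w) - f x - ((t * ip v w : ℝ) : EReal))

/-- The second subderivative `d²f(x,v)(w)`. -/
noncomputable def subderiv2 (ip : E → E → ℝ) (f : E → EReal) (x v w : E) : EReal :=
  Filter.liminf (fun p : ℝ × E => sdq2 ip f x v p.1 p.2)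
    ((nhdsWithin (0 : ℝ) (Set.Ioi 0)) ×ˢ nhds w)

/-- Twice epi-differentiability of `f` at `x` for `v`. -/
def TwiceEpiDiff (ip : E → E → ℝ) (f : E → EReal) (x v : E) : Prop :=
  IsFiniteAt f x ∧
    ∀ t : ℕ → ℝ, (∀ k, 0 < t k) → Tendsto t atTop (nhds 0) →
      ∀ w : E, ∃ ws : ℕ → E, Tendsto ws atTop (nhds w) ∧
        Tendsto (fun k => sdq2 ip f x v (t k) (ws k)) atTop (nhds (subderiv2 ip f x v w))

/-- `v` is a regular subgradient of `f` at `x`. -/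
def RegSubgrad (ip : E → E → ℝ) (f : E → EReal) (x v : E) : Prop :=
  IsFiniteAt f x ∧
    (0 : EReal) ≤ Filter.liminf
      (fun y : E =>
        (((nrm ip (y - x))⁻¹ : ℝ) : EReal) * (f y - f x - ((ip v (y - x) : ℝ) : EReal)))
      (nhdsWithin x {x}ᶜ)

/-- `v` is a (limiting) subgradient of `f` at `x`. -/
def LimSubgrad (ip : E → E → ℝ) (f : E → EReal) (x v : E) : Prop :=
  ∃ xs vs : ℕ → E, (∀ k, RegSubgrad ip f (xs k) (vs k)) ∧
    Tendsto xs atTop (nhds x) ∧ Tendsto vs atTop (nhds v) ∧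
    Tendsto (fun k => f (xs k)) atTop (nhds (f x))

/-- The tangent cone to `C` at `x`. -/
def tangentCone (C : Set E) (x : E) : Set E :=
  {w | ∃ (t : ℕ → ℝ) (ws : ℕ → E), (∀ k, 0 < t k) ∧ Tendsto t atTop (nhds 0) ∧
    Tendsto ws atTop (nhds w) ∧ ∀ k, x + t k • ws k ∈ C}

/-- The regular normal cone to `C` at `x`. -/
def regNormalCone (ip : E → E → ℝ) (C : Set E) (x : E) : Set E :=
  {v | ∀ w ∈ tangentCone C x, ip v w ≤ 0}

/-- The limiting normal cone to `C` at `x`. -/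
def limNormalCone (ip : E → E → ℝ) (C : Set E) (x : E) : Set E :=
  {v | ∃ xs vs : ℕ → E, (∀ k, xs k ∈ C) ∧ (∀ k, vs k ∈ regNormalCone ip C (xs k)) ∧
    Tendsto xs atTop (nhds x) ∧ Tendsto vs atTop (nhds v)}

/-- The critical cone `C_f(x,v)`. -/
def criticalCone (ip : E → E → ℝ) (f : E → EReal) (x v : E) : Set E :=
  {w | subderiv f x w = ((ip v w : ℝ) : EReal)}

/-- `f` is locally Lipschitz continuous at `x` relative to its domain. -/
def LocLipAtRelDom (ip : E → E → ℝ) (f : E → EReal) (x : E) : Prop :=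
  IsFiniteAt f x ∧
    ∃ V ∈ nhds x, ∃ ℓ : ℝ, 0 ≤ ℓ ∧
      ∀ a ∈ V, ∀ b ∈ V, f a ≠ ⊤ → f b ≠ ⊤ →
        f a ≠ ⊥ ∧ f b ≠ ⊥ ∧ |(f a).toReal - (f b).toReal| ≤ ℓ * nrm ip (a - b)

/-- `f` is locally Lipschitz continuous relative to its domain. -/
def LocLipRelDom (ip : E → E → ℝ) (f : E → EReal) : Prop :=
  ∀ x : E, f x ≠ ⊤ → LocLipAtRelDom ip f x

/-- `v` is a proximal subgradient of `f` at `x`. -/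
def ProxSubgrad (ip : E → E → ℝ) (f : E → EReal) (x v : E) : Prop :=
  IsFiniteAt f x ∧
    ∃ r > (0 : ℝ), ∃ ε > (0 : ℝ), ∀ x' : E, nrm ip (x' - x) ≤ ε →
      f x + ((ip v (x' - x) - r / 2 * ip (x' - x) (x' - x) : ℝ) : EReal) ≤ f x'

/-- `f` is prox-regular at `x` for `v`. -/
def ProxRegularAtFor (ip : E → E → ℝ) (f : E → EReal) (x v : E) : Prop :=
  IsFiniteAt f x ∧
    (∃ δ > (0 : ℝ), LowerSemicontinuousOn f {x' | nrm ip (x' - x) < δ}) ∧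
    ∃ ε > (0 : ℝ), ∃ r : ℝ, 0 ≤ r ∧
      ∀ x₁ v₁ : E, LimSubgrad ip f x₁ v₁ → nrm ip (x₁ - x) < ε → nrm ip (v₁ - v) < ε →
        f x₁ < f x + (ε : EReal) →
        ∀ x' : E, nrm ip (x' - x) < ε →
          f x₁ + ((ip v₁ (x' - x₁) - r / 2 * ip (x' - x₁) (x' - x₁) : ℝ) : EReal) ≤ f x'

/-- `f` is prox-regular at `x` (for every subgradient). -/
def ProxRegularAt (ip : E → E → ℝ) (f : E → EReal) (x : E) : Prop :=
  ∀ v : E, LimSubgrad ip f x v → ProxRegularAtFor ip f x v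

/-- `f` is subdifferentially continuous at `x`. -/
def SubdiffContAt (ip : E → E → ℝ) (f : E → EReal) (x : E) : Prop :=
  ∀ v : E, LimSubgrad ip f x v →
    ∀ xs vs : ℕ → E, (∀ k, LimSubgrad ip f (xs k) (vs k)) →
      Tendsto xs atTop (nhds x) → Tendsto vs atTop (nhds v) →
      Tendsto (fun k => f (xs k)) atTop (nhds (f x))

/-- `f` is prox-bounded. -/
def ProxBounded (ip : E → E → ℝ) (f : E → EReal) : Prop :=
  ∃ α c : ℝ, ∀ x : E, (c : EReal) ≤ f x + ((α * ip x x : ℝ) : EReal)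

/-- The proximal mapping (as a set of minimizers). -/
def proxSet (ip : E → E → ℝ) (f : E → EReal) (γ : ℝ) (x : E) : Set E :=
  {w | ∀ w' : E,
    f w + ((1 / (2 * γ) * ip (w - x) (w - x) : ℝ) : EReal) ≤
      f w' + ((1 / (2 * γ) * ip (w' - x) (w' - x) : ℝ) : EReal)}

/-- The proximal map of `f` with parameter `γ` is single-valued around `z` and the resulting
map is directionally differentiable at `z`. -/
def ProxSingleDirDiff (ip : E → E → ℝ) (f : E → EReal) (γ : ℝ) (z : E) : Prop :=
  ∃ V ∈ nhds z, ∃ P : E → E, (∀ u ∈ V, proxSet ip f γ u = {P u}) ∧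
    ∀ h : E, ∃ L : E,
      Tendsto (fun t : ℝ => t⁻¹ • (P (z + t • h) - P z)) (nhdsWithin 0 (Set.Ioi 0)) (nhds L)

/-- The parabolic difference quotient. -/
noncomputable def parabQuot (f : E → EReal) (x w : E) (t : ℝ) (z : E) : EReal :=
  (((2 / t ^ 2) : ℝ) : EReal) *
    (f (x + t • w + (t ^ 2 / 2) • z) - f x - ((t * (subderiv f x w).toReal : ℝ) : EReal))

/-- The parabolic subderivative `d²f(x)(w | z)`. -/
noncomputable def parabSubderiv (f : E → EReal) (x w z : E) : EReal :=
  Filter.liminf (fun p : ℝ × E => parabQuot f x w p.1 p.2)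
    ((nhdsWithin (0 : ℝ) (Set.Ioi 0)) ×ˢ nhds z)

/-- `f` is parabolically epi-differentiable at `x` for `w`. -/
def ParabEpiDiff (f : E → EReal) (x w : E) : Prop :=
  (∃ z : E, parabSubderiv f x w z < ⊤) ∧
    ∀ t : ℕ → ℝ, (∀ k, 0 < t k) → Tendsto t atTop (nhds 0) →
      ∀ z : E, ∃ zs : ℕ → E, Tendsto zs atTop (nhds z) ∧
        Tendsto (fun k => parabQuot f x w (t k) (zs k)) atTop (nhds (parabSubderiv f x w z))

/-- `φ` is a generalized quadratic form: its domain is a linear subspace and on the domain it is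
given by a symmetric linear operator. -/
def IsGQF (ip : E → E → ℝ) (φ : E → EReal) : Prop :=
  (φ 0 ≠ ⊤) ∧
  (∀ x y : E, φ x ≠ ⊤ → φ y ≠ ⊤ → φ (x + y) ≠ ⊤) ∧
  (∀ (c : ℝ) (x : E), φ x ≠ ⊤ → φ (c • x) ≠ ⊤) ∧
  ∃ L : E → E,
    (∀ x y : E, φ x ≠ ⊤ → φ y ≠ ⊤ → L (x + y) = L x + L y) ∧
    (∀ (c : ℝ) (x : E), φ x ≠ ⊤ → L (c • x) = c • L x) ∧
    (∀ x y : E, φ x ≠ ⊤ → φ y ≠ ⊤ → ip (L x) y = ip x (L y)) ∧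
    (∀ x : E, φ x ≠ ⊤ → φ x = ((ip (L x) x : ℝ) : EReal))

/-- `f` is generalized twice differentiable at `x` for `v`. -/
def GenTwiceDiff (ip : E → E → ℝ) (f : E → EReal) (x v : E) : Prop :=
  TwiceEpiDiff ip f x v ∧ IsGQF ip (subderiv2 ip f x v)

/-- Proto-differentiability of a set-valued map `F` at `x` for `y ∈ F x`. -/
def ProtoDiff (F : E → Set E) (x y : E) : Prop :=
  ∀ w η : E, (w, η) ∈ tangentCone {p : E × E | p.2 ∈ F p.1} (x, y) →
    ∀ t : ℕ → ℝ, (∀ k, 0 < t k) → Tendsto t atTop (nhds 0) →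
      ∃ ws ηs : ℕ → E, Tendsto ws atTop (nhds w) ∧ Tendsto ηs atTop (nhds η) ∧
        ∀ k, y + t k • ηs k ∈ F (x + t k • ws k)

/-- Relative interior of a set (interior relative to its affine hull). -/
def relInterior (C : Set E) : Set E :=
  {y | y ∈ C ∧ ∃ V ∈ nhds y, ∀ z ∈ V, z ∈ affineSpan ℝ C → z ∈ C}

/-- A polyhedral set: the intersection of finitely many closed half-spaces. -/
def IsPolyhedral (ip : E → E → ℝ) (C : Set E) : Prop :=
  ∃ (k : ℕ) (a : Fin k → E) (b : Fin k → ℝ), C = {x | ∀ j : Fin k, ip (a j) x ≤ b j}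

/-- The subdifferential of a convex function. -/
def convexSubdiff (ip : E → E → ℝ) (f : E → EReal) (x : E) : Set E :=
  {v | ∀ z : E, f x + ((ip v (z - x) : ℝ) : EReal) ≤ f z}

/-- The natural inner product on `E × ℝ`. -/
def ipProd (ip : E → E → ℝ) : E × ℝ → E × ℝ → ℝ :=
  fun p q => ip p.1 q.1 + p.2 * q.2

/-- The epigraph of `f`. -/
def epiSet (f : E → EReal) : Set (E × ℝ) :=
  {p | f p.1 ≤ (p.2 : EReal)}

/-- `f` is subdifferentially regular at `x`. -/
def SubdiffRegularAt (ip : E → E → ℝ) (f : E → EReal) (x : E) : Prop :=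
  IsFiniteAt f x ∧
    regNormalCone (ipProd ip) (epiSet f) (x, (f x).toReal) =
      limNormalCone (ipProd ip) (epiSet f) (x, (f x).toReal)

/-! Real-valued versions: semidifferentiability, gradients. -/

/-- `f` is semidifferentiable at `x`. -/
def SemiDiffAt (f : E → ℝ) (x : E) : Prop :=
  ∀ w : E, ∃ d : ℝ,
    Tendsto (fun p : ℝ × E => (p.1)⁻¹ * (f (x + p.1 • p.2) - f x))
      ((nhdsWithin (0 : ℝ) (Set.Ioi 0)) ×ˢ nhds w) (nhds d)

/-- The (real value of the) subderivative of a real-valued function. -/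
noncomputable def dReal (f : E → ℝ) (x w : E) : ℝ :=
  (subderiv (fun y => ((f y : ℝ) : EReal)) x w).toReal

/-- The second-order difference quotient built from the subderivative. -/
noncomputable def sdq2R (f : E → ℝ) (x : E) (t : ℝ) (w : E) : ℝ :=
  (2 / t ^ 2) * (f (x + t • w) - f x - t * dReal f x w)

/-- `f` is twice semidifferentiable at `x`. -/
def TwiceSemiDiffAt (f : E → ℝ) (x : E) : Prop :=
  SemiDiffAt f x ∧
    ∀ w : E, ∃ d : ℝ,
      Tendsto (fun p : ℝ × E => sdq2R f x p.1 p.2)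
        ((nhdsWithin (0 : ℝ) (Set.Ioi 0)) ×ˢ nhds w) (nhds d)

/-- The second semiderivative `d²f(x)(w)` (the liminf; it is the full limit whenever `f` is
twice semidifferentiable at `x`). -/
noncomputable def secondSemiDeriv (f : E → ℝ) (x w : E) : EReal :=
  Filter.liminf (fun p : ℝ × E => ((sdq2R f x p.1 p.2 : ℝ) : EReal))
    ((nhdsWithin (0 : ℝ) (Set.Ioi 0)) ×ˢ nhds w)

/-- `f` is (Fréchet) differentiable at `x` with gradient `g` (w.r.t. inner product `ip`). -/
def HasGradAt (ip : E → E → ℝ) (f : E → ℝ) (x g : E) : Prop :=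
  Tendsto (fun y : E => (nrm ip (y - x))⁻¹ * (f y - f x - ip g (y - x)))
    (nhdsWithin x {x}ᶜ) (nhds 0)

/-- `f` is locally Lipschitz continuous around `x`. -/
def LocLipAt (ip : E → E → ℝ) (f : E → ℝ) (x : E) : Prop :=
  ∃ V ∈ nhds x, ∃ ℓ : ℝ, 0 ≤ ℓ ∧ ∀ a ∈ V, ∀ b ∈ V, |f a - f b| ≤ ℓ * nrm ip (a - b)

/-- `f` is twice differentiable at `x` with gradient map `G` near `x` and second derivative
(the derivative of `G` at `x`) given by the linear map `Dxx`. -/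
def HasSecondDerivAt (ip : E → E → ℝ) (f : E → EReal) (x : E) (G : E → E) (Dxx : E → E) :
    Prop :=
  ∃ V ∈ nhds x, ∃ fr : E → ℝ,
    (∀ z ∈ V, f z = ((fr z : ℝ) : EReal)) ∧
    (∀ z ∈ V, HasGradAt ip fr z (G z)) ∧
    IsLinearMap ℝ Dxx ∧
    Tendsto (fun z : E => (nrm ip (z - x))⁻¹ • (G z - G x - Dxx (z - x)))
      (nhdsWithin x {x}ᶜ) (nhds 0)

/-- `f` is twice differentiable at `x`. -/
def TwiceDiffAt (ip : E → E → ℝ) (f : E → EReal) (x : E) : Prop :=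
  ∃ G Dxx : E → E, HasSecondDerivAt ip f x G Dxx

end Generic

/-! ## Eigenvalues and spectral machinery -/

open scoped Classical in
/-- The eigenvalues of a real symmetric matrix, arranged in nonincreasing order
(junk value `0` if the matrix is not symmetric). -/
noncomputable def eigval {n : ℕ} (X : Matrix (Fin n) (Fin n) ℝ) : Fin n → ℝ :=
  if h : X.IsHermitian then
    fun i => h.eigenvalues (Tuple.sort (fun j => -h.eigenvalues j) i)
  else 0

/-- `Oⁿ(X)`: orthogonal matrices realizing the ordered spectral decomposition of `X`. -/
def eigOrth {n : ℕ} (X : Matrix (Fin n) (Fin n) ℝ) : Set (Matrix (Fin n) (Fin n) ℝ) :=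
  {U | U * Uᵀ = 1 ∧ X = U * Matrix.diagonal (eigval X) * Uᵀ}

open scoped Classical in
/-- The block `α_m` of indices `j` whose eigenvalue `λ_j(X)` equals `λ_i(X)`. -/
noncomputable def blockSet {n : ℕ} (X : Matrix (Fin n) (Fin n) ℝ) (i : Fin n) :
    Finset (Fin n) :=
  Finset.univ.filter fun j => eigval X j = eigval X i

lemma mem_blockSet_self {n : ℕ} (X : Matrix (Fin n) (Fin n) ℝ) (i : Fin n) :
    i ∈ blockSet X i := by
  simp [blockSet]

/-- The increasing enumeration of the block of `i`. -/
noncomputable def blockEmb {n : ℕ} (X : Matrix (Fin n) (Fin n) ℝ) (i : Fin n) :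
    Fin (blockSet X i).card → Fin n :=
  fun a => ((blockSet X i).orderIsoOfFin rfl a : Fin n)

/-- The position of `i` inside its own block. -/
noncomputable def blockIdx {n : ℕ} (X : Matrix (Fin n) (Fin n) ℝ) (i : Fin n) :
    Fin (blockSet X i).card :=
  ((blockSet X i).orderIsoOfFin rfl).symm ⟨i, mem_blockSet_self X i⟩

/-- The principal submatrix of `M` corresponding to the block of `i` (for `X`). -/
noncomputable def blockMat {n : ℕ} (X M : Matrix (Fin n) (Fin n) ℝ) (i : Fin n) :
    Matrix (Fin (blockSet X i).card) (Fin (blockSet X i).card) ℝ :=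
  Matrix.of fun a b => M (blockEmb X i a) (blockEmb X i b)

/-- The directional derivative `λ'(X;H)` of the ordered eigenvalue map, computed through
`U ∈ Oⁿ(X)`: blockwise ordered eigenvalues of `U_{α_m}ᵀ H U_{α_m}`. -/
noncomputable def lambdaDir {n : ℕ} (X U H : Matrix (Fin n) (Fin n) ℝ) : Fin n → ℝ :=
  fun i => eigval (blockMat X (Uᵀ * H * U) i) (blockIdx X i)

open scoped Classical in
/-- The Moore–Penrose pseudoinverse of a square real matrix, characterized by the four
Penrose equations. -/
noncomputable def pinv {n : ℕ} (A : Matrix (Fin n) (Fin n) ℝ) :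
    Matrix (Fin n) (Fin n) ℝ :=
  if h : ∃ B : Matrix (Fin n) (Fin n) ℝ,
      A * B * A = A ∧ B * A * B = B ∧ (A * B)ᵀ = A * B ∧ (B * A)ᵀ = B * A
  then h.choose else 0

/-- The curvature term `2 ∑ₘ ⟨Diag(y)_{αₘαₘ}, U_{αₘ}ᵀ H (μₘ I - X)† H U_{αₘ}⟩`, written as a
single sum over all indices. -/
noncomputable def curvTerm {n : ℕ} (X U H : Matrix (Fin n) (Fin n) ℝ) (y : Fin n → ℝ) : ℝ :=
  2 * ∑ i : Fin n, y i *
    (Uᵀ * (H * pinv (eigval X i • (1 : Matrix (Fin n) (Fin n) ℝ) - X) * H) * U) i i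

/-- Two symmetric matrices admit a simultaneous ordered spectral decomposition. -/
def simOrdSpec {k : ℕ} (A B : Matrix (Fin k) (Fin k) ℝ) : Prop :=
  ∃ P : Matrix (Fin k) (Fin k) ℝ, P * Pᵀ = 1 ∧
    A = P * Matrix.diagonal (eigval A) * Pᵀ ∧
    B = P * Matrix.diagonal (eigval B) * Pᵀ

/-- The subspace of symmetric `n × n` real matrices. -/
def symSubmodule (n : ℕ) : Submodule ℝ (Matrix (Fin n) (Fin n) ℝ) where
  carrier := {A | A.IsSymm}
  add_mem' := by
    intro a b ha hb
    simp only [Set.mem_setOf_eq, Matrix.IsSymm] at *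
    rw [Matrix.transpose_add, ha, hb]
  zero_mem' := by
    simp only [Set.mem_setOf_eq, Matrix.IsSymm, Matrix.transpose_zero]
  smul_mem' := by
    intro c a ha
    simp only [Set.mem_setOf_eq, Matrix.IsSymm] at *
    rw [Matrix.transpose_smul, ha]

/-- The space `Sⁿ` of symmetric `n × n` real matrices. -/
abbrev Sym (n : ℕ) : Type := ↥(symSubmodule n)

/-- The trace inner product `⟨A, B⟩ = tr(AB)` on `Sⁿ`. -/
noncomputable def ipM {n : ℕ} (A B : Sym n) : ℝ :=
  ((A : Matrix (Fin n) (Fin n) ℝ) * (B : Matrix (Fin n) (Fin n) ℝ)).trace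

/-- The Euclidean inner product on `ℝⁿ`. -/
def ipV {n : ℕ} (v w : Fin n → ℝ) : ℝ :=
  ∑ i, v i * w i

/-- The spectral function `g = θ ∘ λ` on `Sⁿ`. -/
noncomputable def specFn {n : ℕ} (θ : (Fin n → ℝ) → EReal) : Sym n → EReal :=
  fun A => θ (eigval (A : Matrix (Fin n) (Fin n) ℝ))

/-- A function on `ℝⁿ` is symmetric (permutation invariant). -/
def SymmetricFn {n : ℕ} {α : Type*} (θ : (Fin n → ℝ) → α) : Prop :=
  ∀ (x : Fin n → ℝ) (σ : Equiv.Perm (Fin n)), θ (fun i => x (σ i)) = θ x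

/-- The diagonal matrix `Diag(w)` as an element of `Sⁿ`. -/
noncomputable def diagSym {n : ℕ} (w : Fin n → ℝ) : Sym n :=
  ⟨Matrix.diagonal w, Matrix.isSymm_diagonal w⟩

/-- The `i`-th order statistic: `orderStat x i` is the `i`-th largest entry of `x`. -/
noncomputable def orderStat {n : ℕ} (x : Fin n → ℝ) : Fin n → ℝ :=
  fun i => x (Tuple.sort (fun j => -x j) i)


lemma exists_perm_of_map_eq {n : ℕ} (f g : Fin n → ℝ)
    (h : Multiset.map f Finset.univ.val = Multiset.map g Finset.univ.val) :
    ∃ σ : Equiv.Perm (Fin n), f = g ∘ σ := by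
  have h1 : (List.ofFn f).Perm (List.ofFn g) := by
    rw [← Multiset.coe_eq_coe]
    simpa [Fin.univ_val_map] using h
  have h2 : f ∘ Tuple.sort f = g ∘ Tuple.sort g := by
    apply List.ofFn_injective
    apply List.Perm.eq_of_pairwise' (r := (· ≤ ·))
    · exact (Tuple.monotone_sort f).sortedLE_ofFn.pairwise
    · exact (Tuple.monotone_sort g).sortedLE_ofFn.pairwise
    · exact (((Tuple.sort f).ofFn_comp_perm f).trans h1).trans ((Tuple.sort g).ofFn_comp_perm g).symm
  refine ⟨(Tuple.sort f)⁻¹.trans (Tuple.sort g), ?_⟩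
  funext i
  have := congrFun h2 ((Tuple.sort f)⁻¹ i)
  simpa using this

lemma orth_comm {n : ℕ} {Q : Matrix (Fin n) (Fin n) ℝ} (h : Q * Qᵀ = 1) : Qᵀ * Q = 1 :=
  mul_eq_one_comm.mp h

lemma sym_herm {n : ℕ} (Z : Sym n) : Z.val.IsHermitian := by
  have := Z.2
  rw [Matrix.IsHermitian, Matrix.conjTranspose_eq_transpose_of_trivial]
  exact this

lemma sym_tr {n : ℕ} (Z : Sym n) : Z.valᵀ = Z.val := Z.2

lemma specFn_conj {n : ℕ} {θ : (Fin n → ℝ) → EReal} (hsym : SymmetricFn θ) (Z : Sym n)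
    (Q : Matrix (Fin n) (Fin n) ℝ) (d : Fin n → ℝ) (hQ : Q * Qᵀ = 1)
    (hZ : Z.val = Q * Matrix.diagonal d * Qᵀ) : specFn θ Z = θ d := by
  have hH := sym_herm Z
  have h1 : Z.val.charpoly = (Matrix.diagonal d).charpoly := by
    rw [hZ, Matrix.charpoly_mul_comm, ← mul_assoc, orth_comm hQ, one_mul]
  have h2 := hH.roots_charpoly_eq_eigenvalues
  rw [h1, Matrix.charpoly_diagonal] at h2
  rw [Polynomial.roots_prod _ _ (Finset.prod_ne_zero_iff.mpr
    fun i _ => Polynomial.X_sub_C_ne_zero _)] at h2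
  simp only [Polynomial.roots_X_sub_C, Multiset.bind_singleton] at h2
  obtain ⟨σ, hσ⟩ := exists_perm_of_map_eq d hH.eigenvalues (by simpa using h2)
  have h3 : θ d = θ hH.eigenvalues := by rw [hσ]; exact hsym _ σ
  rw [h3]
  unfold specFn eigval
  rw [dif_pos hH]
  exact hsym _ _

lemma diag_perm {n : ℕ} (Q : Matrix (Fin n) (Fin n) ℝ) (d : Fin n → ℝ)
    (τ : Equiv.Perm (Fin n)) :
    (Q.submatrix id τ) * Matrix.diagonal (d ∘ τ) * (Q.submatrix id τ)ᵀ
      = Q * Matrix.diagonal d * Qᵀ := by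
  ext i j
  rw [Matrix.mul_apply, Matrix.mul_apply]
  simp only [Matrix.mul_diagonal, Matrix.submatrix_apply, Matrix.transpose_apply,
    id, Function.comp]
  exact Equiv.sum_comp τ (fun k => Q i k * d k * Q j k)

lemma orth_perm {n : ℕ} {Q : Matrix (Fin n) (Fin n) ℝ} (hQ : Q * Qᵀ = 1)
    (τ : Equiv.Perm (Fin n)) : (Q.submatrix id τ) * (Q.submatrix id τ)ᵀ = 1 := by
  have := diag_perm Q (fun _ => 1) τ
  rwa [show ((fun _ : Fin n => (1 : ℝ)) ∘ τ) = fun _ => 1 from rfl, Matrix.diagonal_one, mul_one,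
    mul_one, hQ] at this

lemma exists_diag {n : ℕ} (σ : Equiv.Perm (Fin n)) (Z : Sym n) :
    ∃ (Q : Matrix (Fin n) (Fin n) ℝ) (d : Fin n → ℝ), Q * Qᵀ = 1 ∧
      Z.val = Q * Matrix.diagonal d * Qᵀ ∧ Antitone (d ∘ σ) := by
  have hH := sym_herm Z
  have hs := hH.spectral_theorem
  set Q₀ : Matrix (Fin n) (Fin n) ℝ := hH.eigenvectorUnitary.1 with hQ₀
  have ho : Q₀ * Q₀ᵀ = 1 := by
    have := Unitary.mul_star_self_of_mem hH.eigenvectorUnitary.2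
    simpa [Matrix.star_eq_conjTranspose] using this
  have hd : Z.val = Q₀ * Matrix.diagonal hH.eigenvalues * Q₀ᵀ := by
    conv_lhs => rw [hs]
    simp [Unitary.conjStarAlgAut_apply, Matrix.star_eq_conjTranspose, hQ₀, Function.comp_def]
  set s := Tuple.sort (fun i => - hH.eigenvalues i)
  refine ⟨Q₀.submatrix id (σ⁻¹.trans s), hH.eigenvalues ∘ (σ⁻¹.trans s), orth_perm ho _, ?_, ?_⟩
  · rw [diag_perm]; exact hd
  · intro i j hij
    have := Tuple.monotone_sort (fun i => - hH.eigenvalues i) hij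
    simpa using this

lemma trace_conj_diag {n : ℕ} (R Q : Matrix (Fin n) (Fin n) ℝ) (v d : Fin n → ℝ) :
    (R * Matrix.diagonal v * Rᵀ * (Q * Matrix.diagonal d * Qᵀ)).trace
      = ∑ i, ∑ j, v i * ((Rᵀ * Q) i j) ^ 2 * d j := by
  have : (R * Matrix.diagonal v * Rᵀ * (Q * Matrix.diagonal d * Qᵀ)).trace
      = (Matrix.diagonal v * (Rᵀ * Q) * Matrix.diagonal d * (Rᵀ * Q)ᵀ).trace := by
    rw [Matrix.transpose_mul, Matrix.transpose_transpose]
    rw [show R * Matrix.diagonal v * Rᵀ * (Q * Matrix.diagonal d * Qᵀ)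
      = R * (Matrix.diagonal v * Rᵀ * (Q * Matrix.diagonal d * Qᵀ)) by simp only [mul_assoc]]
    rw [Matrix.trace_mul_comm]
    simp only [mul_assoc]
  rw [this, Matrix.trace]
  refine Finset.sum_congr rfl fun i _ => ?_
  rw [Matrix.diag_apply, Matrix.mul_apply]
  refine Finset.sum_congr rfl fun j _ => ?_
  rw [Matrix.mul_diagonal, Matrix.diagonal_mul, Matrix.transpose_apply]
  ring

lemma doubly_sq {n : ℕ} {M : Matrix (Fin n) (Fin n) ℝ} (hM : M * Mᵀ = 1) :
    (Matrix.of fun i j => (M i j) ^ 2) ∈ doublyStochastic ℝ (Fin n) := by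
  rw [mem_doublyStochastic_iff_sum]
  refine ⟨fun i j => sq_nonneg _, fun i => ?_, fun j => ?_⟩
  · have := congrFun (congrFun hM i) i
    simpa [Matrix.mul_apply, pow_two] using this
  · have := congrFun (congrFun (orth_comm hM) j) j
    simpa [Matrix.mul_apply, pow_two] using this

lemma vonNeumann {n : ℕ} (R Q : Matrix (Fin n) (Fin n) ℝ) (v d : Fin n → ℝ)
    (hR : R * Rᵀ = 1) (hQ : Q * Qᵀ = 1) (σ : Equiv.Perm (Fin n))
    (hv : Antitone (v ∘ σ)) (hd : Antitone (d ∘ σ)) :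
    (R * Matrix.diagonal v * Rᵀ * (Q * Matrix.diagonal d * Qᵀ)).trace ≤ ∑ i, v i * d i := by
  rw [trace_conj_diag]
  have hM : (Rᵀ * Q) * (Rᵀ * Q)ᵀ = 1 := by
    rw [Matrix.transpose_mul, Matrix.transpose_transpose, mul_assoc, ← mul_assoc Q, hQ, one_mul,
      orth_comm hR]
  have hS := doubly_sq hM
  have hmono : Monovary v d := by
    intro i j hij
    by_contra hcon
    push Not at hcon
    have h1 : σ⁻¹ j < σ⁻¹ i := by
      by_contra h
      push Not at h
      have := hd h
      simp at this
      linarith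
    have := hv h1.le
    simp at this
    linarith
  set f : Matrix (Fin n) (Fin n) ℝ → ℝ := fun S => ∑ i, ∑ j, v i * S i j * d j with hf
  have hsub : (doublyStochastic ℝ (Fin n) : Set (Matrix (Fin n) (Fin n) ℝ))
      ⊆ {S | f S ≤ ∑ i, v i * d i} := by
    rw [doublyStochastic_eq_convexHull_permMatrix]
    apply convexHull_min
    · rintro S ⟨τ, rfl⟩
      show f _ ≤ _
      have : f (Equiv.Perm.permMatrix ℝ τ) = ∑ i, v i * d (τ i) := by
        simp only [hf]
        refine Finset.sum_congr rfl fun i _ => ?_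
        rw [Finset.sum_eq_single (τ i)]
        · simp [Equiv.Perm.permMatrix, PEquiv.toMatrix_apply]
        · intro j _ hj
          simp [Equiv.Perm.permMatrix, PEquiv.toMatrix_apply, Ne.symm hj]
        · simp
      rw [this]
      exact hmono.sum_mul_comp_perm_le_sum_mul
    · apply convex_halfSpace_le
      constructor
      · intro A B
        simp [hf, ← Finset.sum_add_distrib, mul_add, add_mul]
      · intro c A
        simp only [hf, Matrix.smul_apply, smul_eq_mul, Finset.mul_sum]
        refine Finset.sum_congr rfl fun i _ => Finset.sum_congr rfl fun j _ => by ring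
  exact hsub hS

lemma trace_sq_diag {n : ℕ} (Q : Matrix (Fin n) (Fin n) ℝ) (d : Fin n → ℝ) (hQ : Q * Qᵀ = 1) :
    (Q * Matrix.diagonal d * Qᵀ * (Q * Matrix.diagonal d * Qᵀ)).trace = ∑ i, d i ^ 2 := by
  rw [trace_conj_diag, orth_comm hQ]
  refine Finset.sum_congr rfl fun i _ => ?_
  rw [Finset.sum_eq_single i]
  · simp; ring
  · intro j _ hj; simp [Matrix.one_apply_ne (Ne.symm hj)]
  · simp

/-- Hoffman–Wielandt. -/
lemma hoffman {n : ℕ} (Z Z' R Q : Matrix (Fin n) (Fin n) ℝ) (v d : Fin n → ℝ)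
    (hR : R * Rᵀ = 1) (hQ : Q * Qᵀ = 1) (σ : Equiv.Perm (Fin n))
    (hv : Antitone (v ∘ σ)) (hd : Antitone (d ∘ σ))
    (hZ : Z = R * Matrix.diagonal v * Rᵀ) (hZ' : Z' = Q * Matrix.diagonal d * Qᵀ) :
    ∑ i, (v i - d i) ^ 2 ≤ ((Z - Z') * (Z - Z')).trace := by
  have h1 := vonNeumann R Q v d hR hQ σ hv hd
  have h2 := trace_sq_diag R v hR
  have h3 := trace_sq_diag Q d hQ
  rw [← hZ] at h1 h2
  rw [← hZ'] at h1 h3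
  have h4 : ((Z - Z') * (Z - Z')).trace
      = (Z * Z).trace - 2 * (Z * Z').trace + (Z' * Z').trace := by
    rw [sub_mul, mul_sub, mul_sub]
    simp only [Matrix.trace_sub]
    rw [Matrix.trace_mul_comm Z' Z]; ring
  have h5 : ∑ i, (v i - d i) ^ 2 = ∑ i, v i ^ 2 - 2 * ∑ i, v i * d i + ∑ i, d i ^ 2 := by
    rw [Finset.mul_sum, ← Finset.sum_sub_distrib, ← Finset.sum_add_distrib]
    exact Finset.sum_congr rfl fun i _ => by ring
  rw [h4, h5, h2, h3]; linarith

lemma exists_sort {n : ℕ} (x y w : Fin n → ℝ)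
    (h : ∀ i j, x i = x j → 0 ≤ (y i - y j) * (w i - w j)) :
    ∃ σ : Equiv.Perm (Fin n), Antitone (x ∘ σ) ∧
      (∀ i j, i ≤ j → x (σ i) = x (σ j) → y (σ j) ≤ y (σ i) ∧ w (σ j) ≤ w (σ i)) := by
  set f : Fin n → ℝ ×ₗ (ℝ ×ₗ ℝ) := fun i => toLex (- x i, toLex (- y i, - w i)) with hf
  have hm := Tuple.monotone_sort f
  refine ⟨Tuple.sort f, ?_, ?_⟩
  · intro i j hij
    have := hm hij
    simp only [hf, Function.comp, Prod.Lex.toLex_le_toLex] at this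
    simp only [Function.comp]
    rcases this with h | ⟨h, _⟩ <;> linarith
  · intro i j hij hx
    have := hm hij
    simp only [hf, Function.comp, Prod.Lex.toLex_le_toLex] at this
    have hh := h _ _ hx
    rcases this with h | ⟨_, h | ⟨h, h'⟩⟩
    · simp only [hf] at hx; linarith
    · simp only [hf] at hh ⊢
      constructor
      · linarith
      · by_contra hc
        push Not at hc
        nlinarith
    · exact ⟨by simp only [hf]; linarith, by simp only [hf]; linarith⟩

lemma exists_large {n : ℕ} (x y : Fin n → ℝ) (σ : Equiv.Perm (Fin n)) (hx : Antitone (x ∘ σ))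
    (h : ∀ i j, i ≤ j → x (σ i) = x (σ j) → y (σ j) ≤ y (σ i)) :
    ∃ c₀ : ℝ, 0 ≤ c₀ ∧ ∀ c, c₀ ≤ c → Antitone ((fun i => y i + c * x i) ∘ σ) := by
  refine ⟨∑ i, ∑ j, |(y i - y j) / (x i - x j)|, by positivity, ?_⟩
  intro c hc i j hij
  simp only [Function.comp]
  rcases (hx hij).lt_or_eq with h1 | h1
  · simp only [Function.comp] at h1
    have h2 : |(y (σ j) - y (σ i)) / (x (σ j) - x (σ i))| ≤ c := by
      refine le_trans ?_ hc
      refine le_trans ?_ (Finset.single_le_sum (f := fun i => ∑ j, |(y i - y j) / (x i - x j)|)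
        (fun _ _ => by positivity) (Finset.mem_univ (σ j)))
      exact Finset.single_le_sum (f := fun k => |(y (σ j) - y k) / (x (σ j) - x k)|)
        (fun _ _ => by positivity) (Finset.mem_univ (σ i))
    have h3 : (y (σ j) - y (σ i)) = ((y (σ j) - y (σ i)) / (x (σ j) - x (σ i))) * (x (σ j) - x (σ i)) := by
      field_simp [sub_ne_zero.mpr h1.ne]
    have h4 := (abs_le.mp h2).1
    nlinarith
  · have := h i j hij h1.symm
    simp only [Function.comp] at h1
    rw [h1]; linarith

lemma sdq2_shift (a b : EReal) (hb : b ≠ ⊤) (hb' : b ≠ ⊥) (c : ℝ) (hc : 0 < c) (r s : ℝ) :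
    (c : EReal) * (a - b - (r : EReal)) = (c : EReal) * (a - b - (s : EReal)) + ((c * (s - r) : ℝ) : EReal) := by
  induction b with
  | top => exact absurd rfl hb
  | bot => exact absurd rfl hb'
  | coe b =>
    induction a with
    | top =>
      rw [EReal.top_sub_coe, EReal.top_sub_coe, EReal.top_sub_coe, EReal.coe_mul_top_of_pos hc,
        EReal.top_add_coe]
    | bot => simp [EReal.coe_mul_bot_of_pos hc]
    | coe a => norm_cast; ring

lemma cayley {n : ℕ} (K : Matrix (Fin n) (Fin n) ℝ) (hK : Kᵀ = -K) :
    ∃ R E : ℝ → Matrix (Fin n) (Fin n) ℝ, (∀ t, R t * (R t)ᵀ = 1) ∧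
      (∀ t, R t = 1 + t • K + (t ^ 2 / 2) • E t) ∧ Tendsto E (𝓝 0) (𝓝 (K * K)) := by
  set A : ℝ → Matrix (Fin n) (Fin n) ℝ := fun t => 1 - (t / 2) • K with hA
  have hAT : ∀ t, (A t)ᵀ = 1 + (t / 2) • K := by
    intro t; simp [hA, hK]
  have hdet : ∀ t, IsUnit (A t).det := by
    intro t
    have hpd : ((1 : Matrix (Fin n) (Fin n) ℝ) + ((t / 2) • K)ᴴ * ((t / 2) • K)).PosDef :=
      Matrix.PosDef.one.add_posSemidef (Matrix.posSemidef_conjTranspose_mul_self _)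
    have heq : (A t)ᵀ * A t = 1 + ((t / 2) • K)ᴴ * ((t / 2) • K) := by
      rw [hAT, hA, Matrix.conjTranspose_eq_transpose_of_trivial, Matrix.transpose_smul, hK]
      simp only [mul_sub, add_mul, mul_one, one_mul, smul_neg, neg_mul]
      abel
    have h := hpd.det_pos
    rw [← heq, Matrix.det_mul, Matrix.det_transpose] at h
    exact isUnit_iff_ne_zero.mpr (fun h0 => by simp [h0] at h)
  have hinv : ∀ t, (A t)⁻¹ * A t = 1 := fun t => Matrix.nonsing_inv_mul _ (hdet t)
  have hinv' : ∀ t, (A t)ᵀ * ((A t)ᵀ)⁻¹ = 1 := fun t =>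
    Matrix.mul_nonsing_inv _ (by rw [Matrix.det_transpose]; exact hdet t)
  have e1 : ∀ t, (A t)⁻¹ = 1 + (t / 2) • ((A t)⁻¹ * K) := by
    intro t
    have : (A t)⁻¹ * A t = (A t)⁻¹ - (t / 2) • ((A t)⁻¹ * K) := by
      show (A t)⁻¹ * (1 - (t / 2) • K) = _
      rw [mul_sub, mul_one, mul_smul_comm]
    rw [hinv] at this
    exact sub_eq_iff_eq_add.mp this.symm
  refine ⟨fun t => (A t)⁻¹ * (A t)ᵀ, fun t => (A t)⁻¹ * (K * K), ?_, ?_, ?_⟩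
  · intro t
    have hc : (A t)ᵀ * A t = A t * (A t)ᵀ := by
      rw [hAT, hA]
      simp only [mul_sub, sub_mul, add_mul, mul_add, mul_one, one_mul]
      abel
    rw [Matrix.transpose_mul, Matrix.transpose_transpose, Matrix.transpose_nonsing_inv]
    calc (A t)⁻¹ * (A t)ᵀ * (A t * ((A t)ᵀ)⁻¹)
        = (A t)⁻¹ * ((A t)ᵀ * A t) * ((A t)ᵀ)⁻¹ := by simp only [mul_assoc]
      _ = ((A t)⁻¹ * A t) * ((A t)ᵀ * ((A t)ᵀ)⁻¹) := by rw [hc]; simp only [mul_assoc]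
      _ = 1 := by rw [hinv, hinv', one_mul]
  · intro t
    have h2 : (A t)⁻¹ * K = K + (t / 2) • ((A t)⁻¹ * (K * K)) := by
      conv_lhs => rw [e1 t]
      rw [add_mul, one_mul, smul_mul_assoc, mul_assoc]
    have h3 : (A t)ᵀ = A t + t • K := by
      rw [hAT, hA]; module
    show (A t)⁻¹ * (A t)ᵀ = _
    rw [h3, mul_add, hinv, mul_smul_comm, h2]
    module
  · have hc : ContinuousAt (fun t => (A t)⁻¹ * (K * K)) 0 := by
      have : (fun t => (A t)⁻¹ * (K * K)) = fun t => ((A t).det)⁻¹ • (A t).adjugate * (K * K) := by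
        funext t; rw [Matrix.inv_def, Ring.inverse_eq_inv']
      rw [this]
      have hAc : Continuous A := by rw [hA]; fun_prop
      have q1 : ContinuousAt (fun t => ((A t).det)⁻¹) 0 :=
        ContinuousAt.inv₀ hAc.matrix_det.continuousAt (hdet 0).ne_zero
      have q2 : ContinuousAt (fun t => (A t).adjugate) 0 := hAc.matrix_adjugate.continuousAt
      have q3 : ContinuousAt (fun t => ((A t).det)⁻¹ • (A t).adjugate) 0 := q1.smul q2
      exact q3.mul continuousAt_const
    have := hc.tendsto
    simpa [hA] using this

/-- The second-order remainder in the expansion of `R V Rᵀ`. -/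
def remG {n : ℕ} (K E V : Matrix (Fin n) (Fin n) ℝ) (t : ℝ) : Matrix (Fin n) (Fin n) ℝ :=
  (2 : ℝ) • (K * V * Kᵀ) + E * V + V * Eᵀ + t • (K * V * Eᵀ + E * V * Kᵀ) + (t ^ 2 / 2) • (E * V * Eᵀ)

lemma conj_expand {n : ℕ} (K E V R : Matrix (Fin n) (Fin n) ℝ) (t : ℝ)
    (hR : R = 1 + t • K + (t ^ 2 / 2) • E) :
    R * V * Rᵀ = V + t • (K * V + V * Kᵀ) + (t ^ 2 / 2) • remG K E V t := by
  rw [hR, remG]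
  simp only [Matrix.transpose_add, Matrix.transpose_smul, Matrix.transpose_one, add_mul, mul_add,
    smul_mul_assoc, mul_smul_comm, smul_add, smul_smul, one_mul, mul_one]
  module

lemma remG_tendsto {n : ℕ} (K V : Matrix (Fin n) (Fin n) ℝ) (E : ℝ → Matrix (Fin n) (Fin n) ℝ)
    (hE : Tendsto E (𝓝 0) (𝓝 (K * K))) (t : ℕ → ℝ) (ht : Tendsto t atTop (𝓝 0)) :
    Tendsto (fun k => remG K (E (t k)) V (t k)) atTop
      (𝓝 ((2 : ℝ) • (K * V * Kᵀ) + K * K * V + V * (K * K)ᵀ)) := by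
  have hE' := hE.comp ht
  have hc : Continuous (fun p : Matrix (Fin n) (Fin n) ℝ × ℝ => remG K p.1 V p.2) := by
    unfold remG; fun_prop
  have := (hc.tendsto (K * K, 0)).comp (hE'.prodMk_nhds ht)
  simpa [remG, Function.comp_def] using this

lemma trace_mul_eq {n : ℕ} (A B : Matrix (Fin n) (Fin n) ℝ) :
    (A * B).trace = ∑ i, ∑ j, A i j * B j i := by
  simp [Matrix.trace, Matrix.mul_apply]

lemma trace_diag_mul {n : ℕ} (d : Fin n → ℝ) (B : Matrix (Fin n) (Fin n) ℝ) :
    (Matrix.diagonal d * B).trace = ∑ i, d i * B i i := by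
  simp [Matrix.trace, Matrix.diagonal_mul]

lemma trace_mul_diag {n : ℕ} (d : Fin n → ℝ) (B : Matrix (Fin n) (Fin n) ℝ) :
    (B * Matrix.diagonal d).trace = ∑ i, d i * B i i := by
  rw [Matrix.trace_mul_comm, trace_diag_mul]

/-- `tr([K,[K,V]]Λ)` for skew `K`, diagonal `V, Λ`. -/
lemma trace_double {n : ℕ} (K : Matrix (Fin n) (Fin n) ℝ) (hK : Kᵀ = -K) (v x : Fin n → ℝ) :
    (((2 : ℝ) • (K * diagonal v * Kᵀ) + K * K * diagonal v + diagonal v * (K * K)ᵀ) *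
      diagonal x).trace = ∑ i, ∑ j, K i j ^ 2 * (v j - v i) * (x i - x j) := by
  have hk : ∀ i j, K j i = - K i j := fun i j => by
    have := congrFun (congrFun hK i) j; simpa using this
  have h1 : (((2 : ℝ) • (K * diagonal v * Kᵀ) + K * K * diagonal v + diagonal v * (K * K)ᵀ) *
      diagonal x).trace = ∑ i, ∑ j, 2 * K i j ^ 2 * (v j - v i) * x i := by
    rw [trace_mul_diag]
    refine Finset.sum_congr rfl fun i _ => ?_
    rw [Matrix.add_apply, Matrix.add_apply, Matrix.smul_apply, Matrix.mul_apply,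
      Matrix.mul_diagonal, Matrix.diagonal_mul, Matrix.transpose_apply, Matrix.mul_apply]
    simp only [Matrix.mul_diagonal, Matrix.transpose_apply, smul_eq_mul]
    simp only [Finset.mul_sum, Finset.sum_mul, ← Finset.sum_add_distrib]
    refine Finset.sum_congr rfl fun j _ => ?_
    rw [hk i j]; ring
  rw [h1]
  have h2 : ∑ i, ∑ j, 2 * K i j ^ 2 * (v j - v i) * x i
      = ∑ i, ∑ j, 2 * K i j ^ 2 * (v i - v j) * x j := by
    rw [Finset.sum_comm]
    refine Finset.sum_congr rfl fun i _ => Finset.sum_congr rfl fun j _ => ?_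
    rw [hk i j]; ring
  have h3 : ∑ i, ∑ j, 2 * K i j ^ 2 * (v j - v i) * x i
      = (∑ i, ∑ j, 2 * K i j ^ 2 * (v j - v i) * x i
        + ∑ i, ∑ j, 2 * K i j ^ 2 * (v i - v j) * x j) / 2 := by rw [← h2]; ring
  rw [h3, ← Finset.sum_add_distrib, Finset.sum_div]
  refine Finset.sum_congr rfl fun i _ => ?_
  rw [← Finset.sum_add_distrib, Finset.sum_div]
  refine Finset.sum_congr rfl fun j _ => ?_
  ring

/-- Within blocks of equal `x`, `H` is diagonal with diagonal `w`. -/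
def BlockDiag {n : ℕ} (x w : Fin n → ℝ) (H : Matrix (Fin n) (Fin n) ℝ) : Prop :=
  ∀ i j, x i = x j → H i j = if i = j then w i else 0

/-- The curvature quadratic form. -/
def quadF {n : ℕ} (x y : Fin n → ℝ) (H : Matrix (Fin n) (Fin n) ℝ) : ℝ :=
  ∑ i, ∑ j, (y j - y i) / (x j - x i) * H i j ^ 2

def genK {n : ℕ} (x : Fin n → ℝ) (H : Matrix (Fin n) (Fin n) ℝ) : Matrix (Fin n) (Fin n) ℝ :=
  Matrix.of fun i j => H i j / (x j - x i)

lemma genK_skew {n : ℕ} (x : Fin n → ℝ) (H : Matrix (Fin n) (Fin n) ℝ) (hH : Hᵀ = H) :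
    (genK x H)ᵀ = - genK x H := by
  ext i j
  have : H j i = H i j := congrFun (congrFun hH i) j
  simp only [genK, Matrix.transpose_apply, Matrix.of_apply, Matrix.neg_apply, this]
  rw [← neg_sub (x j) (x i), div_neg]

lemma core_lower {n : ℕ} (x y w : Fin n → ℝ) (c : ℝ) (σ : Equiv.Perm (Fin n))
    (hv : Antitone ((fun i => y i + c * x i) ∘ σ))
    (H : Matrix (Fin n) (Fin n) ℝ) (hH : Hᵀ = H) (hb : BlockDiag x w H)
    (t : ℕ → ℝ) (ht : ∀ k, 0 < t k) (ht0 : Tendsto t atTop (𝓝 0))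
    (Hs Q : ℕ → Matrix (Fin n) (Fin n) ℝ) (ws : ℕ → Fin n → ℝ)
    (hHs : Tendsto Hs atTop (𝓝 H)) (hws : Tendsto ws atTop (𝓝 w))
    (hQ : ∀ k, Q k * (Q k)ᵀ = 1)
    (hZ : ∀ k, diagonal x + t k • Hs k = Q k * diagonal (x + t k • ws k) * (Q k)ᵀ)
    (hd : ∀ k, Antitone ((x + t k • ws k) ∘ σ)) :
    ∃ ℓ : ℕ → ℝ, Tendsto ℓ atTop (𝓝 (quadF x y H)) ∧
      ∀ k, ℓ k ≤ 2 / t k * (∑ i, y i * ws k i - ∑ i, y i * Hs k i i) := by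
  set K := genK x H with hKdef
  have hK := genK_skew x H hH
  have hKij : ∀ i j, K i j = H i j / (x j - x i) := fun i j => rfl
  have hk : ∀ i j, K j i = - K i j := fun i j => by
    have := congrFun (congrFun hK i) j; simpa using this
  have hHij : ∀ i j, H j i = H i j := fun i j => congrFun (congrFun hH i) j
  obtain ⟨R, E, hR, hRE, hE⟩ := cayley K hK
  set v : Fin n → ℝ := fun i => y i + c * x i with hvdef
  set G : ℕ → Matrix (Fin n) (Fin n) ℝ := fun k => remG K (E (t k)) (diagonal v) (t k) with hG
  have hGt := remG_tendsto K (diagonal v) E hE t ht0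
  refine ⟨fun k => c * (∑ i, ws k i ^ 2 - (Hs k * Hs k).trace)
    + 2 * ((K * diagonal v + diagonal v * Kᵀ) * Hs k).trace
    + (G k * (diagonal x + t k • Hs k)).trace, ?_, ?_⟩
  · have hlim : Tendsto (fun k => c * (∑ i, ws k i ^ 2 - (Hs k * Hs k).trace)
        + 2 * ((K * diagonal v + diagonal v * Kᵀ) * Hs k).trace
        + (G k * (diagonal x + t k • Hs k)).trace) atTop
        (𝓝 (c * (∑ i, w i ^ 2 - (H * H).trace)
        + 2 * ((K * diagonal v + diagonal v * Kᵀ) * H).trace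
        + (((2 : ℝ) • (K * diagonal v * Kᵀ) + K * K * diagonal v + diagonal v * (K * K)ᵀ) *
      (diagonal x + (0 : ℝ) • H)).trace)) := by
      have htr : Continuous (fun A : Matrix (Fin n) (Fin n) ℝ => A.trace) :=
        continuous_id.matrix_trace
      refine Tendsto.add (Tendsto.add (Tendsto.const_mul c (Tendsto.sub ?_ ?_))
        (Tendsto.const_mul 2 ?_)) ?_
      · refine tendsto_finsetSum _ fun i _ => ?_
        exact ((tendsto_pi_nhds.mp hws) i).pow 2
      · exact (htr.tendsto _).comp (hHs.mul hHs)
      · exact (htr.tendsto _).comp (hHs.const_mul _)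
      · exact (htr.tendsto _).comp (hGt.mul ((ht0.smul hHs).const_add (diagonal x)))
    convert hlim using 2
    rw [zero_smul, add_zero, trace_double K hK, quadF]
    have e1 : ∑ i, w i ^ 2 = ∑ i, ∑ j, (if x i = x j then H i j ^ 2 else 0) := by
      refine Finset.sum_congr rfl fun i _ => ?_
      rw [Finset.sum_eq_single i]
      · rw [if_pos rfl, hb i i rfl, if_pos rfl]
      · intro j _ hj
        split_ifs with h
        · rw [hb i j h, if_neg (Ne.symm hj)]; simp
        · rfl
      · simp
    have e2 : (H * H).trace = ∑ i, ∑ j, H i j ^ 2 := by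
      rw [trace_mul_eq]
      refine Finset.sum_congr rfl fun i _ => Finset.sum_congr rfl fun j _ => ?_
      rw [hHij i j]; ring
    have e3 : ((K * diagonal v + diagonal v * Kᵀ) * H).trace
        = ∑ i, ∑ j, K i j * (v j - v i) * H i j := by
      rw [trace_mul_eq]
      refine Finset.sum_congr rfl fun i _ => Finset.sum_congr rfl fun j _ => ?_
      rw [Matrix.add_apply, Matrix.mul_diagonal, Matrix.diagonal_mul, Matrix.transpose_apply, hk i j,
        hHij i j]; ring
    rw [e1, e2, e3]
    simp only [Finset.mul_sum, ← Finset.sum_add_distrib, ← Finset.sum_sub_distrib]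
    refine Finset.sum_congr rfl fun i _ => Finset.sum_congr rfl fun j _ => ?_
    rw [hKij]
    by_cases h : x i = x j
    · simp [h]
    · rw [if_neg h]
      have : x j - x i ≠ 0 := sub_ne_zero.mpr (Ne.symm h)
      simp only [hvdef]
      field_simp
      ring
  · intro k
    have htk := ht k
    have hvn := vonNeumann (R (t k)) (Q k) v (x + t k • ws k) (hR _) (hQ k) σ hv (hd k)
    rw [← hZ k, conj_expand K (E (t k)) (diagonal v) _ _ (hRE (t k))] at hvn
    have hsq := trace_sq_diag (Q k) (x + t k • ws k) (hQ k)
    rw [← hZ k] at hsq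
    set T := t k
    set W := ws k
    set h := Hs k
    have f1 : ((diagonal v + T • (K * diagonal v + diagonal v * Kᵀ) + (T ^ 2 / 2) • remG K (E T) (diagonal v) T)
        * (diagonal x + T • h)).trace = (∑ i, v i * x i) + T * ∑ i, v i * h i i
          + T * ((K * diagonal v + diagonal v * Kᵀ) * diagonal x).trace
          + T ^ 2 * ((K * diagonal v + diagonal v * Kᵀ) * h).trace
          + (T ^ 2 / 2) * (G k * (diagonal x + T • h)).trace := by
      have a1 : (diagonal v * diagonal x : Matrix (Fin n) (Fin n) ℝ).trace = ∑ i, v i * x i := by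
        rw [trace_diag_mul]; simp
      have a2 := trace_diag_mul v h
      rw [← a1, ← a2]
      simp only [add_mul, mul_add, Matrix.trace_add, smul_mul_assoc, mul_smul_comm,
        Matrix.trace_smul, smul_eq_mul, hG]
      ring
    have f2 : ((K * diagonal v + diagonal v * Kᵀ) * diagonal x).trace = 0 := by
      rw [trace_mul_diag]
      refine Finset.sum_eq_zero fun i _ => ?_
      rw [Matrix.add_apply, Matrix.mul_diagonal, Matrix.diagonal_mul, Matrix.transpose_apply]
      have : K i i = 0 := by have := hk i i; linarith
      rw [this]; ring
    have f3 : ((diagonal x + T • h) * (diagonal x + T • h)).trace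
        = (∑ i, x i ^ 2) + 2 * T * (∑ i, x i * h i i) + T ^ 2 * (h * h).trace := by
      have a1 : (diagonal x * diagonal x : Matrix (Fin n) (Fin n) ℝ).trace = ∑ i, x i ^ 2 := by
        rw [trace_diag_mul]; simp [pow_two]
      have a2 := trace_diag_mul x h
      have a3 := trace_mul_diag x h
      rw [← a1]
      simp only [add_mul, mul_add, Matrix.trace_add, smul_mul_assoc, mul_smul_comm,
        Matrix.trace_smul, smul_eq_mul, a2, a3]
      ring
    have f4 : ∑ i, (x + T • W) i ^ 2 = (∑ i, x i ^ 2) + 2 * T * (∑ i, x i * W i)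
        + T ^ 2 * ∑ i, W i ^ 2 := by
      simp only [Finset.mul_sum, ← Finset.sum_add_distrib]
      refine Finset.sum_congr rfl fun i _ => ?_
      simp; ring
    have f5 : ∑ i, v i * (x + T • W) i = (∑ i, v i * x i) + T * (∑ i, y i * W i)
        + T * c * ∑ i, x i * W i := by
      simp only [Finset.mul_sum, ← Finset.sum_add_distrib]
      refine Finset.sum_congr rfl fun i _ => ?_
      simp [hvdef]; ring
    have f6 : ∑ i, v i * h i i = (∑ i, y i * h i i) + c * ∑ i, x i * h i i := by
      simp only [Finset.mul_sum, ← Finset.sum_add_distrib]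
      refine Finset.sum_congr rfl fun i _ => ?_
      simp [hvdef]; ring
    rw [f1, f2, f5, f6] at hvn
    rw [f3, f4] at hsq
    have hsq' : 2 * ((∑ i, x i * h i i) - ∑ i, x i * W i) = T * (∑ i, W i ^ 2 - (h * h).trace) := by
      have : T * (2 * ((∑ i, x i * h i i) - ∑ i, x i * W i))
        = T * (T * (∑ i, W i ^ 2 - (h * h).trace)) := by linarith
      exact mul_left_cancel₀ htk.ne' this
    rw [div_mul_eq_mul_div, le_div_iff₀ htk]
    have : T * ((c * (∑ i, W i ^ 2 - (h * h).trace)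
        + 2 * ((K * diagonal v + diagonal v * Kᵀ) * h).trace
        + (G k * (diagonal x + T • h)).trace) * T)
        ≤ T * (2 * (∑ i, y i * W i - ∑ i, y i * h i i)) := by
      have hs2 : T * c * (2 * ((∑ i, x i * h i i) - ∑ i, x i * W i))
        = T * c * (T * (∑ i, W i ^ 2 - (h * h).trace)) := by rw [hsq']
      nlinarith
    exact le_of_mul_le_mul_left this htk

lemma core_recovery {n : ℕ} (x y w : Fin n → ℝ)
    (H : Matrix (Fin n) (Fin n) ℝ) (hH : Hᵀ = H) (hb : BlockDiag x w H)
    (t : ℕ → ℝ) (ht : ∀ k, 0 < t k) (ht0 : Tendsto t atTop (𝓝 0))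
    (ws : ℕ → Fin n → ℝ) (hws : Tendsto ws atTop (𝓝 w)) :
    ∃ Hs R : ℕ → Matrix (Fin n) (Fin n) ℝ, Tendsto Hs atTop (𝓝 H) ∧
      (∀ k, R k * (R k)ᵀ = 1) ∧
      (∀ k, diagonal x + t k • Hs k = R k * diagonal (x + t k • ws k) * (R k)ᵀ) ∧
      Tendsto (fun k => 2 / t k * (∑ i, y i * ws k i - ∑ i, y i * Hs k i i)) atTop
        (𝓝 (quadF x y H)) := by
  set K := genK x H with hKdef
  have hK := genK_skew x H hH
  have hKij : ∀ i j, K i j = H i j / (x j - x i) := fun i j => rfl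
  have hk : ∀ i j, K j i = - K i j := fun i j => by
    have := congrFun (congrFun hK i) j; simpa using this
  have hkk : ∀ i, K i i = 0 := fun i => by have := hk i i; linarith
  obtain ⟨R, E, hR, hRE, hE⟩ := cayley K hK
  set G : ℕ → Matrix (Fin n) (Fin n) ℝ := fun k => remG K (E (t k)) (diagonal x) (t k) with hG
  have hGt := remG_tendsto K (diagonal x) E hE t ht0
  have hE' := hE.comp ht0
  set N : ℕ → Matrix (Fin n) (Fin n) ℝ := fun k => K + (t k / 2) • E (t k) with hN
  have hNt : Tendsto N atTop (𝓝 K) := by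
    have := (tendsto_const_nhds (x := K)).add ((ht0.div_const 2).smul hE')
    simpa [hN] using this
  have hRN : ∀ k, R (t k) = 1 + t k • N k := by
    intro k; rw [hRE, hN]; module
  have hRt : Tendsto (fun k => R (t k)) atTop (𝓝 1) := by
    have := (tendsto_const_nhds (x := (1 : Matrix (Fin n) (Fin n) ℝ))).add (ht0.smul hNt)
    simpa [hRN] using this
  have hexp := fun k => conj_expand K (E (t k)) (diagonal x) _ _ (hRE (t k))
  set S : Matrix (Fin n) (Fin n) ℝ := K * diagonal x + diagonal x * Kᵀ with hS
  have hSij : ∀ i j, S i j = K i j * (x j - x i) := by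
    intro i j
    rw [hS, Matrix.add_apply, Matrix.mul_diagonal, Matrix.diagonal_mul, Matrix.transpose_apply, hk i j]
    ring
  refine ⟨fun k => S + (t k / 2) • G k + R (t k) * diagonal (ws k) * (R (t k))ᵀ,
    fun k => R (t k), ?_, fun k => hR _, ?_, ?_⟩
  · have hc : Continuous (fun p : ℝ × Matrix (Fin n) (Fin n) ℝ × Matrix (Fin n) (Fin n) ℝ × (Fin n → ℝ) =>
        S + (p.1 / 2) • p.2.1 + p.2.2.1 * diagonal p.2.2.2 * (p.2.2.1)ᵀ) := by fun_prop
    have := (hc.tendsto (0, _, 1, w)).comp (ht0.prodMk_nhds (hGt.prodMk_nhds (hRt.prodMk_nhds hws)))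
    have hHeq : H = S + ((0 : ℝ) / 2) • ((2 : ℝ) • (K * diagonal x * Kᵀ) + K * K * diagonal x + diagonal x * (K * K)ᵀ) + 1 * diagonal w * (1 : Matrix (Fin n) (Fin n) ℝ)ᵀ := ?_
    · rw [hHeq]; exact this
    ext i j
    simp only [zero_div, zero_smul, add_zero, one_mul, Matrix.transpose_one, mul_one,
      Matrix.add_apply, hSij, hKij]
    by_cases h : x i = x j
    · rw [hb i j h, h, Matrix.diagonal_apply]; simp
    · have h1 : x j - x i ≠ 0 := sub_ne_zero.mpr (Ne.symm h)
      have h2 : i ≠ j := fun e => h (by rw [e])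
      rw [Matrix.diagonal_apply_ne _ h2]; field_simp; simp
  · intro k
    have : diagonal (x + t k • ws k) = diagonal x + t k • diagonal (ws k) := by
      ext i j; by_cases h : i = j
      · subst h; simp
      · simp [h]
    rw [this, mul_add, add_mul, hexp k]
    simp only [mul_smul_comm, smul_mul_assoc, hG]
    module
  · have key : ∀ k, 2 / t k * (∑ i, y i * ws k i - ∑ i, y i *
        (S + (t k / 2) • G k + R (t k) * diagonal (ws k) * (R (t k))ᵀ) i i)
        = - (G k * diagonal y).trace - 2 * ((N k * diagonal (ws k) + diagonal (ws k) * (N k)ᵀ) * diagonal y).trace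
          - 2 * t k * (N k * diagonal (ws k) * (N k)ᵀ * diagonal y).trace := by
      intro k
      have e0 : R (t k) * diagonal (ws k) * (R (t k))ᵀ = diagonal (ws k)
          + t k • (N k * diagonal (ws k) + diagonal (ws k) * (N k)ᵀ)
          + (t k ^ 2) • (N k * diagonal (ws k) * (N k)ᵀ) := by
        rw [hRN]
        simp only [Matrix.transpose_add, Matrix.transpose_smul, Matrix.transpose_one, add_mul, mul_add,
          smul_mul_assoc, mul_smul_comm, smul_add, smul_smul, one_mul, mul_one]
        module
      rw [e0]
      have e1 := trace_mul_diag y (S + (t k / 2) • G k + (diagonal (ws k)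
          + t k • (N k * diagonal (ws k) + diagonal (ws k) * (N k)ᵀ)
          + (t k ^ 2) • (N k * diagonal (ws k) * (N k)ᵀ)))
      rw [← e1]
      have e2 : (S * diagonal y).trace = 0 := by
        rw [trace_mul_diag]
        exact Finset.sum_eq_zero fun i _ => by rw [hSij, hkk]; ring
      have e3 : (diagonal (ws k) * diagonal y).trace = ∑ i, y i * ws k i := by
        rw [trace_mul_diag]; simp
      rw [← e3]
      have hgen : ∀ (A B C D F V : Matrix (Fin n) (Fin n) ℝ) (a b c : ℝ),
          ((A + a • B + (C + b • D + c • F)) * V).trace = (A * V).trace + a * (B * V).trace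
            + ((C * V).trace + b * (D * V).trace + c * (F * V).trace) := by
        intro A B C D F V a b c
        simp only [add_mul, Matrix.trace_add, smul_mul_assoc, Matrix.trace_smul, smul_eq_mul]
      rw [hgen, e2]
      have := (ht k).ne'
      field_simp
      ring
    simp_rw [key]
    have hc : Continuous (fun p : ℝ × Matrix (Fin n) (Fin n) ℝ × Matrix (Fin n) (Fin n) ℝ × (Fin n → ℝ) =>
        - (p.2.1 * diagonal y).trace
        - 2 * ((p.2.2.1 * diagonal p.2.2.2 + diagonal p.2.2.2 * (p.2.2.1)ᵀ) * diagonal y).trace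
        - 2 * p.1 * (p.2.2.1 * diagonal p.2.2.2 * (p.2.2.1)ᵀ * diagonal y).trace) := by fun_prop
    have := (hc.tendsto (0, _, K, w)).comp (ht0.prodMk_nhds (hGt.prodMk_nhds (hNt.prodMk_nhds hws)))
    refine (this.congr fun k => rfl).trans (le_of_eq (congrArg 𝓝 ?_))
    dsimp only
    rw [trace_double K hK]
    have z : ((K * diagonal w + diagonal w * Kᵀ) * diagonal y).trace = 0 := by
      rw [trace_mul_diag]
      refine Finset.sum_eq_zero fun i _ => ?_
      rw [Matrix.add_apply, Matrix.mul_diagonal, Matrix.diagonal_mul, Matrix.transpose_apply, hkk]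
      ring
    rw [z, quadF]
    simp only [mul_zero, sub_zero, zero_mul, ← Finset.sum_neg_distrib]
    refine Finset.sum_congr rfl fun i _ => Finset.sum_congr rfl fun j _ => ?_
    rw [hKij]
    by_cases h : x i = x j
    · simp [h]
    · have h1 : x j - x i ≠ 0 := sub_ne_zero.mpr (Ne.symm h)
      field_simp
      ring

/-! ## Sequential tools for second subderivatives -/

section Gen
variable {F : Type*} [AddCommGroup F] [Module ℝ F] [TopologicalSpace F]

lemma seq_tendsto_prod (t : ℕ → ℝ) (ht : ∀ k, 0 < t k) (ht0 : Tendsto t atTop (𝓝 0))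
    (ws : ℕ → F) (w : F) (hws : Tendsto ws atTop (𝓝 w)) :
    Tendsto (fun k => (t k, ws k)) atTop ((𝓝[>] (0 : ℝ)) ×ˢ 𝓝 w) := by
  refine Tendsto.prodMk ?_ hws
  rw [tendsto_nhdsWithin_iff]
  exact ⟨ht0, Eventually.of_forall ht⟩

lemma sub2_le_liminf (ip : F → F → ℝ) (f : F → EReal) (x v w : F)
    (t : ℕ → ℝ) (ht : ∀ k, 0 < t k) (ht0 : Tendsto t atTop (𝓝 0))
    (ws : ℕ → F) (hws : Tendsto ws atTop (𝓝 w)) :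
    subderiv2 ip f x v w ≤ liminf (fun k => sdq2 ip f x v (t k) (ws k)) atTop := by
  have h := seq_tendsto_prod t ht ht0 ws w hws
  exact Filter.liminf_le_liminf_of_le (u := fun p : ℝ × F => sdq2 ip f x v p.1 p.2) h

lemma sub2_seq [FirstCountableTopology F] (ip : F → F → ℝ) (f : F → EReal) (x v w : F) (a : EReal)
    (h : subderiv2 ip f x v w < a) :
    ∃ (t : ℕ → ℝ) (ws : ℕ → F), (∀ k, 0 < t k) ∧ Tendsto t atTop (𝓝 0) ∧
      Tendsto ws atTop (𝓝 w) ∧ ∀ k, sdq2 ip f x v (t k) (ws k) < a := by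
  have hfr := Filter.frequently_lt_of_liminf_lt (by isBoundedDefault) h
  have hpos : ∀ᶠ p : ℝ × F in (𝓝[>] (0 : ℝ)) ×ˢ 𝓝 w, 0 < p.1 :=
    (tendsto_fst (f := 𝓝[>] (0 : ℝ)) (g := 𝓝 w)).eventually self_mem_nhdsWithin
  obtain ⟨s, hs, hs'⟩ := Filter.exists_seq_forall_of_frequently (hfr.and_eventually hpos)
  refine ⟨fun k => (s k).1, fun k => (s k).2, fun k => (hs' k).2, ?_, ?_, fun k => (hs' k).1⟩
  · exact (tendsto_fst.comp hs).mono_right nhdsWithin_le_nhds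
  · exact tendsto_snd.comp hs

lemma tendsto_of_limit (ip : F → F → ℝ) (f : F → EReal) (x v w : F)
    (t : ℕ → ℝ) (ht : ∀ k, 0 < t k) (ht0 : Tendsto t atTop (𝓝 0))
    (ws : ℕ → F) (hws : Tendsto ws atTop (𝓝 w)) (b : ℕ → EReal)
    (hb : Tendsto b atTop (𝓝 (subderiv2 ip f x v w)))
    (hle : ∀ k, sdq2 ip f x v (t k) (ws k) ≤ b k) :
    Tendsto (fun k => sdq2 ip f x v (t k) (ws k)) atTop (𝓝 (subderiv2 ip f x v w)) := by
  refine tendsto_of_le_liminf_of_limsup_le (sub2_le_liminf ip f x v w t ht ht0 ws hws) ?_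
    (by isBoundedDefault) (by isBoundedDefault)
  rw [← hb.limsup_eq]
  exact Filter.limsup_le_limsup (Eventually.of_forall hle) (by isBoundedDefault) (by isBoundedDefault)

lemma tendsto_of_top (ip : F → F → ℝ) (f : F → EReal) (x v w : F)
    (h : subderiv2 ip f x v w = ⊤)
    (t : ℕ → ℝ) (ht : ∀ k, 0 < t k) (ht0 : Tendsto t atTop (𝓝 0)) :
    ∃ ws : ℕ → F, Tendsto ws atTop (𝓝 w) ∧
      Tendsto (fun k => sdq2 ip f x v (t k) (ws k)) atTop (𝓝 (subderiv2 ip f x v w)) :=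
  ⟨fun _ => w, tendsto_const_nhds, tendsto_of_limit ip f x v w t ht ht0 _ tendsto_const_nhds
    (fun _ => ⊤) (by rw [h]; exact tendsto_const_nhds) (fun _ => le_top)⟩

lemma sub2_le_of_tendsto (ip : F → F → ℝ) (f : F → EReal) (x v w : F)
    (t : ℕ → ℝ) (ht : ∀ k, 0 < t k) (ht0 : Tendsto t atTop (𝓝 0))
    (ws : ℕ → F) (hws : Tendsto ws atTop (𝓝 w)) (α : EReal)
    (h : Tendsto (fun k => sdq2 ip f x v (t k) (ws k)) atTop (𝓝 α)) :
    subderiv2 ip f x v w ≤ α := by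
  have := sub2_le_liminf ip f x v w t ht ht0 ws hws
  rwa [h.liminf_eq] at this

end Gen

lemma tendsto_add_real (a : ℕ → EReal) (α : EReal) (ha : Tendsto a atTop (𝓝 α))
    (ℓ : ℕ → ℝ) (l : ℝ) (hℓ : Tendsto ℓ atTop (𝓝 l)) :
    Tendsto (fun k => a k + (ℓ k : EReal)) atTop (𝓝 (α + (l : EReal))) := by
  have h := EReal.continuousAt_add (p := (α, (l : EReal))) (Or.inr (by simp)) (Or.inr (by simp))
  have h2 : Tendsto (fun k => (ℓ k : EReal)) atTop (𝓝 (l : EReal)) :=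
    (continuous_coe_real_ereal.tendsto l).comp hℓ
  exact h.tendsto.comp (ha.prodMk_nhds h2)

lemma le_sub_real (a b : EReal) (ℓ : ℝ) (h : a + (ℓ : EReal) ≤ b) : a ≤ b + ((-ℓ : ℝ) : EReal) := by
  have := add_le_add_left h ((-ℓ : ℝ) : EReal)
  rw [add_assoc] at this
  rw [← EReal.coe_add, add_neg_cancel, EReal.coe_zero, add_zero] at this
  exact this

/-! ## Frames -/

instance symFC (n : ℕ) : FirstCountableTopology (Sym n) := by
  have : FirstCountableTopology (Matrix (Fin n) (Fin n) ℝ) :=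
    inferInstanceAs (FirstCountableTopology (Fin n → Fin n → ℝ))
  exact Topology.IsInducing.subtypeVal.firstCountableTopology

lemma conj_symm {n : ℕ} (Q D : Matrix (Fin n) (Fin n) ℝ) (hD : Dᵀ = D) :
    (Q * D * Qᵀ)ᵀ = Q * D * Qᵀ := by
  rw [Matrix.transpose_mul, Matrix.transpose_mul, Matrix.transpose_transpose, hD, mul_assoc]

/-- Conjugate of a symmetric matrix as an element of `Sym n`. -/
def cj {n : ℕ} (Q D : Matrix (Fin n) (Fin n) ℝ) (hD : Dᵀ = D) : Sym n :=
  ⟨Q * D * Qᵀ, conj_symm Q D hD⟩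

def frm {n : ℕ} (Q : Matrix (Fin n) (Fin n) ℝ) (w : Fin n → ℝ) : Sym n :=
  cj Q (diagonal w) (Matrix.diagonal_transpose w)

lemma frm_val {n : ℕ} (Q : Matrix (Fin n) (Fin n) ℝ) (w : Fin n → ℝ) :
    (frm Q w).val = Q * diagonal w * Qᵀ := rfl

def hat {n : ℕ} (U : Matrix (Fin n) (Fin n) ℝ) (H : Sym n) : Matrix (Fin n) (Fin n) ℝ :=
  Uᵀ * H.val * U

lemma hat_symm {n : ℕ} (U : Matrix (Fin n) (Fin n) ℝ) (H : Sym n) : (hat U H)ᵀ = hat U H := by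
  have := conj_symm Uᵀ H.val (sym_tr H)
  rwa [Matrix.transpose_transpose] at this

lemma hat_continuous {n : ℕ} (U : Matrix (Fin n) (Fin n) ℝ) : Continuous (hat U) := by
  unfold hat
  exact (continuous_const.mul continuous_subtype_val).mul continuous_const

lemma cj_hat {n : ℕ} {U : Matrix (Fin n) (Fin n) ℝ} (hU : U * Uᵀ = 1) (H : Sym n) :
    U * hat U H * Uᵀ = H.val := by
  unfold hat
  calc U * (Uᵀ * H.val * U) * Uᵀ = (U * Uᵀ) * H.val * (U * Uᵀ) := by simp only [mul_assoc]
    _ = H.val := by rw [hU, one_mul, mul_one]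

lemma hat_cj {n : ℕ} {U : Matrix (Fin n) (Fin n) ℝ} (hU : U * Uᵀ = 1)
    (D : Matrix (Fin n) (Fin n) ℝ) (hD : Dᵀ = D) : hat U (cj U D hD) = D := by
  unfold hat cj
  have h := orth_comm hU
  calc Uᵀ * (U * D * Uᵀ) * U = (Uᵀ * U) * D * (Uᵀ * U) := by simp only [mul_assoc]
    _ = D := by rw [h, one_mul, mul_one]

lemma ip_frame {n : ℕ} (U : Matrix (Fin n) (Fin n) ℝ) (Y : Sym n) (y : Fin n → ℝ)
    (hY : Y.val = U * diagonal y * Uᵀ) (H : Sym n) : ipM Y H = ∑ i, y i * hat U H i i := by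
  rw [← trace_diag_mul, ipM, hY, hat]
  rw [show U * diagonal y * Uᵀ * H.val = U * (diagonal y * Uᵀ * H.val) by simp only [mul_assoc]]
  rw [Matrix.trace_mul_comm]
  simp only [mul_assoc]

lemma ipM_sq_hat {n : ℕ} {U : Matrix (Fin n) (Fin n) ℝ} (hU : U * Uᵀ = 1) (A B : Sym n) :
    ipM A B = (hat U A * hat U B).trace := by
  unfold hat ipM
  rw [show Uᵀ * A.val * U * (Uᵀ * B.val * U) = Uᵀ * A.val * (U * Uᵀ) * B.val * U by
    simp only [mul_assoc], hU, mul_one, Matrix.trace_mul_comm _ U, ← mul_assoc, ← mul_assoc, hU, one_mul]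

lemma ipM_cont {n : ℕ} : Continuous (fun p : Sym n × Sym n => ipM p.1 p.2) := by
  unfold ipM
  exact ((continuous_subtype_val.comp continuous_fst).mul
    (continuous_subtype_val.comp continuous_snd)).matrix_trace

lemma ipM_tendsto {n : ℕ} {As Bs : ℕ → Sym n} {A B : Sym n} (hA : Tendsto As atTop (𝓝 A))
    (hB : Tendsto Bs atTop (𝓝 B)) : Tendsto (fun k => ipM (As k) (Bs k)) atTop (𝓝 (ipM A B)) := by
  have h1 : Tendsto (fun k => (As k).val) atTop (𝓝 A.val) := (continuous_subtype_val.tendsto A).comp hA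
  have h2 : Tendsto (fun k => (Bs k).val) atTop (𝓝 B.val) := (continuous_subtype_val.tendsto B).comp hB
  have h3 := h1.mul h2
  have htr : Continuous (fun A : Matrix (Fin n) (Fin n) ℝ => A.trace) := continuous_id.matrix_trace
  exact (htr.tendsto _).comp h3

lemma blowup_real (t : ℕ → ℝ) (ht : ∀ k, 0 < t k) (ht0 : Tendsto t atTop (𝓝 0))
    (u v : ℕ → ℝ) (l m : ℝ) (hu : Tendsto u atTop (𝓝 l)) (hv : Tendsto v atTop (𝓝 m))
    (hle : ∀ᶠ k in atTop, 2 / t k * u k ≤ v k) : l ≤ 0 := by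
  by_contra hcon
  push Not at hcon
  have h0 : Tendsto (fun k => 2 / t k) atTop atTop := by
    have h1 : Tendsto t atTop (𝓝[>] 0) := tendsto_nhdsWithin_iff.mpr ⟨ht0, Eventually.of_forall ht⟩
    exact h1.inv_tendsto_nhdsGT_zero.const_mul_atTop (show (0 : ℝ) < 2 by norm_num)
  have hlim := h0.atTop_mul_pos hcon hu
  exact not_tendsto_nhds_of_tendsto_atTop (tendsto_atTop_mono' _ hle hlim) _ hv

lemma ipM_comm {n : ℕ} (A B : Sym n) : ipM A B = ipM B A := Matrix.trace_mul_comm _ _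

lemma ipM_smul_right {n : ℕ} (A B : Sym n) (c : ℝ) : ipM A (c • B) = c * ipM A B := by
  unfold ipM
  rw [Submodule.coe_smul, mul_smul_comm, Matrix.trace_smul, smul_eq_mul]

lemma ipM_smul_left {n : ℕ} (A B : Sym n) (c : ℝ) : ipM (c • A) B = c * ipM A B := by
  rw [ipM_comm, ipM_smul_right, ipM_comm]

lemma ipM_add_right {n : ℕ} (A B C : Sym n) : ipM A (B + C) = ipM A B + ipM A C := by
  unfold ipM
  rw [Submodule.coe_add, mul_add, Matrix.trace_add]

lemma ipM_sum_sq {n : ℕ} (A : Sym n) : ipM A A = ∑ i, ∑ j, A.val i j ^ 2 := by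
  unfold ipM
  rw [trace_mul_eq]
  refine Finset.sum_congr rfl fun i _ => Finset.sum_congr rfl fun j _ => ?_
  have : A.val j i = A.val i j := congrFun (congrFun (sym_tr A) i) j
  rw [this]; ring

lemma ipM_self_nonneg {n : ℕ} (A : Sym n) : 0 ≤ ipM A A := by
  rw [ipM_sum_sq]; positivity

/-- Frame simultaneously diagonalizing. -/
def Fr {n : ℕ} (X Y : Sym n) (x y : Fin n → ℝ) (U : Matrix (Fin n) (Fin n) ℝ) : Prop :=
  U * Uᵀ = 1 ∧ X.val = U * diagonal x * Uᵀ ∧ Y.val = U * diagonal y * Uᵀ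

lemma sdq2_rel {n : ℕ} {θ : (Fin n → ℝ) → EReal} (hsym : SymmetricFn θ) (X Y : Sym n)
    (x y : Fin n → ℝ) (hfin : IsFiniteAt (specFn θ) X) (hx : specFn θ X = θ x)
    (t : ℝ) (ht : 0 < t) (H : Sym n) (w : Fin n → ℝ) (Q : Matrix (Fin n) (Fin n) ℝ)
    (hQ : Q * Qᵀ = 1) (hZ : (X + t • H).val = Q * diagonal (x + t • w) * Qᵀ) :
    sdq2 ipM (specFn θ) X Y t H = sdq2 ipV θ x y t w
      + ((2 / t * (ipV y w - ipM Y H) : ℝ) : EReal) := by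
  unfold sdq2
  rw [specFn_conj hsym _ Q _ hQ hZ, hx]
  rw [sdq2_shift (θ (x + t • w)) (θ x) (by rw [← hx]; exact hfin.1) (by rw [← hx]; exact hfin.2)
    (2 / t ^ 2) (by positivity) (t * ipM Y H) (t * ipV y w)]
  congr 2
  field_simp

lemma sdq2_chg {n : ℕ} {θ : (Fin n → ℝ) → EReal} (X Y Y' : Sym n)
    (hfin : IsFiniteAt (specFn θ) X) (t : ℝ) (ht : 0 < t) (H : Sym n) :
    sdq2 ipM (specFn θ) X Y t H = sdq2 ipM (specFn θ) X Y' t H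
      + ((2 / t * (ipM Y' H - ipM Y H) : ℝ) : EReal) := by
  unfold sdq2
  rw [sdq2_shift (specFn θ (X + t • H)) (specFn θ X) hfin.1 hfin.2
    (2 / t ^ 2) (by positivity) (t * ipM Y H) (t * ipM Y' H)]
  congr 2
  field_simp

lemma prox_bound {n : ℕ} (f : Sym n → EReal) (X Y : Sym n) (hprox : ProxSubgrad ipM f X Y) :
    ∃ r : ℝ, 0 < r ∧ ∀ (t : ℕ → ℝ), (∀ k, 0 < t k) → Tendsto t atTop (𝓝 0) →
      ∀ (Hs : ℕ → Sym n) (H : Sym n), Tendsto Hs atTop (𝓝 H) →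
      ∀ᶠ k in atTop, ((-(r * ipM (Hs k) (Hs k)) : ℝ) : EReal) ≤ sdq2 ipM f X Y (t k) (Hs k) := by
  obtain ⟨hfin, r, hr, ε, hε, hp⟩ := hprox
  refine ⟨r, hr, fun t ht ht0 Hs H hHs => ?_⟩
  have h1 : Tendsto (fun k => t k • Hs k) atTop (𝓝 ((0 : ℝ) • H)) := ht0.smul hHs
  have h2 : Tendsto (fun k => nrm ipM (t k • Hs k)) atTop (𝓝 (nrm ipM ((0 : ℝ) • H))) := by
    unfold nrm
    have hc : Continuous (fun A : Sym n => Real.sqrt (ipM A A)) :=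
      Real.continuous_sqrt.comp (ipM_cont.comp (continuous_id.prodMk continuous_id))
    exact (hc.tendsto _).comp h1
  have h3 : nrm ipM ((0 : ℝ) • H) = 0 := by
    unfold nrm; rw [ipM_smul_left, zero_mul, Real.sqrt_zero]
  rw [h3] at h2
  filter_upwards [h2.eventually (ge_mem_nhds hε)] with k hk
  have hk' := hp (X + t k • Hs k) (by rw [add_sub_cancel_left]; exact hk)
  rw [add_sub_cancel_left, ipM_smul_right, ipM_smul_right, ipM_smul_left] at hk'
  have htk := ht k
  unfold sdq2
  generalize f (X + t k • Hs k) = a at hk'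
  obtain ⟨b, hb⟩ : ∃ b : ℝ, f X = b := ⟨(f X).toReal, (EReal.coe_toReal hfin.1 hfin.2).symm⟩
  rw [hb] at hk' ⊢
  induction a with
  | top => rw [EReal.top_sub_coe, EReal.top_sub_coe, EReal.coe_mul_top_of_pos (by positivity)]; exact le_top
  | bot => rw [← EReal.coe_add] at hk'; exact absurd hk' (not_le.mpr (EReal.bot_lt_coe _))
  | coe a =>
    norm_cast at hk' ⊢
    have : -(r * ipM (Hs k) (Hs k)) = 2 / t k ^ 2 * (- (r / 2 * (t k * (t k * ipM (Hs k) (Hs k))))) := by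
      field_simp
    rw [this]
    refine mul_le_mul_of_nonneg_left ?_ (by positivity)
    linarith

lemma prox_frame {n : ℕ} {θ : (Fin n → ℝ) → EReal} (hsym : SymmetricFn θ) (X Y Y' : Sym n)
    (hprox : ProxSubgrad ipM (specFn θ) X Y) (x y : Fin n → ℝ) (U U' : Matrix (Fin n) (Fin n) ℝ)
    (hF : Fr X Y x y U) (hF' : Fr X Y' x y U') : ProxSubgrad ipM (specFn θ) X Y' := by
  obtain ⟨hfin, r, hr, ε, hε, hp⟩ := hprox
  refine ⟨hfin, r, hr, ε, hε, fun Z hZ => ?_⟩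
  obtain ⟨hU, hX, hY⟩ := hF
  obtain ⟨hU', hX', hY'⟩ := hF'
  set T : Sym n → Sym n := fun A => cj U (hat U' A) (hat_symm _ _) with hT
  have hhat : ∀ A, hat U (T A) = hat U' A := fun A => hat_cj hU _ _
  have hTX : T X = X := by
    apply Subtype.ext
    show U * hat U' X * Uᵀ = _
    have : hat U' X = diagonal x := by
      have e : X = cj U' (diagonal x) (Matrix.diagonal_transpose x) := Subtype.ext hX'
      rw [e, hat_cj hU']
    rw [this, ← hX]
  have hTsub : T Z - X = T (Z - X) := by
    conv_lhs => rw [← hTX]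
    apply Subtype.ext
    simp only [hT, cj, hat, Submodule.coe_sub, mul_sub, sub_mul]
  have hg : specFn θ (T Z) = specFn θ Z := by
    obtain ⟨Q, d, hQ, hZd, _⟩ := exists_diag 1 Z
    have hM : (U * (U'ᵀ * Q)) * (U * (U'ᵀ * Q))ᵀ = 1 := by
      rw [Matrix.transpose_mul, Matrix.transpose_mul, Matrix.transpose_transpose]
      calc U * (U'ᵀ * Q) * (Qᵀ * U' * Uᵀ) = U * (U'ᵀ * (Q * Qᵀ) * U') * Uᵀ := by simp only [mul_assoc]
        _ = 1 := by rw [hQ, mul_one, orth_comm hU', mul_one, hU]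
    rw [specFn_conj hsym Z Q d hQ hZd, specFn_conj hsym (T Z) (U * (U'ᵀ * Q)) d hM]
    show U * (U'ᵀ * Z.val * U') * Uᵀ = _
    rw [hZd]
    simp only [Matrix.transpose_mul, Matrix.transpose_transpose, mul_assoc]
  have hip : ∀ A, ipM (T A) (T A) = ipM A A := fun A => by
    rw [ipM_sq_hat hU, ipM_sq_hat hU' A, hhat]
  have hipY : ∀ A, ipM Y (T A) = ipM Y' A := fun A => by
    rw [ip_frame U Y y hY, ip_frame U' Y' y hY', hhat]
  have := hp (T Z) (by unfold nrm at hZ ⊢; rw [hTsub, hip]; exact hZ)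
  rw [hTsub, hip, hipY, hg] at this
  exact this

/-- Monotonicity from prox-subgradients in every frame. -/
lemma lemC {n : ℕ} {θ : (Fin n → ℝ) → EReal} (hsym : SymmetricFn θ) (X Y Y' : Sym n)
    (hprox : ProxSubgrad ipM (specFn θ) X Y) (x y : Fin n → ℝ) (U U' : Matrix (Fin n) (Fin n) ℝ)
    (hF : Fr X Y x y U) (hF' : Fr X Y' x y U') (H : Sym n)
    (hne : subderiv2 ipM (specFn θ) X Y H ≠ ⊤) : ipM Y' H ≤ ipM Y H := by
  by_contra hcon
  push Not at hcon
  obtain ⟨a, ha, ha'⟩ := EReal.lt_iff_exists_real_btwn.mp (lt_top_iff_ne_top.mpr hne)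
  obtain ⟨t, Hs, ht, ht0, hHs, hlt⟩ := sub2_seq _ _ _ _ _ _ ha
  obtain ⟨r, hr, hb⟩ := prox_bound _ _ _ (prox_frame hsym X Y Y' hprox x y U U' hF hF')
  have hb' := hb t ht ht0 Hs H hHs
  have hip : ∀ A : Sym n, Tendsto (fun k => ipM A (Hs k)) atTop (𝓝 (ipM A H)) := fun A =>
    ipM_tendsto tendsto_const_nhds hHs
  have hip2 : Tendsto (fun k => ipM (Hs k) (Hs k)) atTop (𝓝 (ipM H H)) := ipM_tendsto hHs hHs
  have hle : ∀ᶠ k in atTop, 2 / t k * (ipM Y' (Hs k) - ipM Y (Hs k)) ≤ a + r * ipM (Hs k) (Hs k) := by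
    filter_upwards [hb'] with k hk
    have h1 := hlt k
    rw [sdq2_chg X Y Y' hprox.1 (t k) (ht k)] at h1
    have h2 := lt_of_le_of_lt (add_le_add_left hk _) h1
    rw [← EReal.coe_add, EReal.coe_lt_coe_iff] at h2
    linarith
  have := blowup_real t ht ht0 (fun k => ipM Y' (Hs k) - ipM Y (Hs k))
    (fun k => a + r * ipM (Hs k) (Hs k)) _ _ ((hip Y').sub (hip Y))
    (Tendsto.const_add a (Tendsto.const_mul r hip2)) hle
  linarith

lemma ipV_eq {n : ℕ} (v w : Fin n → ℝ) : ipV v w = ∑ i, v i * w i := rfl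

lemma hat_sub {n : ℕ} (U : Matrix (Fin n) (Fin n) ℝ) (τ : Equiv.Perm (Fin n)) (A : Sym n) :
    hat (U.submatrix id τ) A = (hat U A).submatrix τ τ := by
  unfold hat
  ext i j
  simp [Matrix.mul_apply, Matrix.submatrix_apply]

lemma hat_frm {n : ℕ} {U : Matrix (Fin n) (Fin n) ℝ} (hU : U * Uᵀ = 1) (w : Fin n → ℝ) :
    hat U (frm U w) = diagonal w := hat_cj hU _ _

lemma fr_spec {n : ℕ} {θ : (Fin n → ℝ) → EReal} (hsym : SymmetricFn θ) {X Y : Sym n}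
    {x y : Fin n → ℝ} {U : Matrix (Fin n) (Fin n) ℝ} (hF : Fr X Y x y U) : specFn θ X = θ x :=
  specFn_conj hsym X U x hF.1 hF.2.1

lemma lemC_swap {n : ℕ} {θ : (Fin n → ℝ) → EReal} (hsym : SymmetricFn θ) {X Y : Sym n}
    (hprox : ProxSubgrad ipM (specFn θ) X Y) {x y : Fin n → ℝ} {U : Matrix (Fin n) (Fin n) ℝ}
    (hF : Fr X Y x y U) (w : Fin n → ℝ)
    (hne : subderiv2 ipM (specFn θ) X Y (frm U w) ≠ ⊤) (i j : Fin n) (hij : x i = x j) :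
    0 ≤ (y i - y j) * (w i - w j) := by
  by_cases hne' : i = j
  · subst hne'; simp
  set τ := Equiv.swap i j with hτ
  have hxτ : x ∘ τ = x := by
    funext k
    simp only [Function.comp, hτ, Equiv.swap_apply_def]
    split_ifs with h1 h2
    · rw [h1, hij]
    · rw [h2, hij]
    · rfl
  have hF' : Fr X (frm (U.submatrix id τ) y) x y (U.submatrix id τ) := by
    refine ⟨orth_perm hF.1 τ, ?_, rfl⟩
    have := diag_perm U x τ
    rw [hxτ] at this
    rw [this]; exact hF.2.1
  have h := lemC hsym X Y _ hprox x y U _ hF hF' (frm U w) hne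
  rw [ip_frame _ _ y hF'.2.2, ip_frame U Y y hF.2.2, hat_sub, hat_frm hF.1] at h
  simp only [Matrix.submatrix_apply, Matrix.diagonal_apply_eq] at h
  have h2 : ∑ k, (y k * w k - y k * w (τ k)) = (y i * w i - y i * w (τ i)) + (y j * w j - y j * w (τ j)) := by
    apply Finset.sum_eq_add i j hne'
    · intro k _ hk
      rw [hτ, Equiv.swap_apply_of_ne_of_ne hk.1 hk.2, sub_self]
    · simp
    · simp
  rw [Finset.sum_sub_distrib] at h2
  rw [hτ, Equiv.swap_apply_left, Equiv.swap_apply_right, ← hτ] at h2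
  linarith

lemma frm_cont {n : ℕ} (U : Matrix (Fin n) (Fin n) ℝ) : Continuous (frm U) := by
  unfold frm cj
  refine Continuous.subtype_mk ?_ _
  exact (continuous_const.mul (Continuous.matrix_diagonal continuous_id)).mul continuous_const

lemma diag_add_smul {n : ℕ} (x w : Fin n → ℝ) (t : ℝ) :
    (diagonal (x + t • w) : Matrix (Fin n) (Fin n) ℝ) = diagonal x + t • diagonal w := by
  ext i j; by_cases h : i = j
  · subst h; simp
  · simp [h]

lemma frm_shift {n : ℕ} {X Y : Sym n} {x y : Fin n → ℝ} {U : Matrix (Fin n) (Fin n) ℝ}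
    (hF : Fr X Y x y U) (t : ℝ) (w : Fin n → ℝ) :
    (X + t • frm U w).val = U * diagonal (x + t • w) * Uᵀ := by
  rw [diag_add_smul, Submodule.coe_add, Submodule.coe_smul, frm_val, hF.2.1]
  simp only [mul_add, add_mul, mul_smul_comm, smul_mul_assoc]

lemma ip_frm {n : ℕ} {X Y : Sym n} {x y : Fin n → ℝ} {U : Matrix (Fin n) (Fin n) ℝ}
    (hF : Fr X Y x y U) (w : Fin n → ℝ) : ipM Y (frm U w) = ipV y w := by
  rw [ip_frame U Y y hF.2.2, hat_frm hF.1]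
  simp [ipV]

lemma sdq2_frm {n : ℕ} {θ : (Fin n → ℝ) → EReal} (hsym : SymmetricFn θ) {X Y : Sym n}
    (hfin : IsFiniteAt (specFn θ) X) {x y : Fin n → ℝ} {U : Matrix (Fin n) (Fin n) ℝ}
    (hF : Fr X Y x y U) (t : ℝ) (ht : 0 < t) (w : Fin n → ℝ) :
    sdq2 ipM (specFn θ) X Y t (frm U w) = sdq2 ipV θ x y t w := by
  rw [sdq2_rel hsym X Y x y hfin (fr_spec hsym hF) t ht (frm U w) w U hF.1 (frm_shift hF t w),
    ip_frm hF]
  simp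

lemma claim1 {n : ℕ} {θ : (Fin n → ℝ) → EReal} (hsym : SymmetricFn θ) {X Y : Sym n}
    (hfin : IsFiniteAt (specFn θ) X) {x y : Fin n → ℝ} {U : Matrix (Fin n) (Fin n) ℝ}
    (hF : Fr X Y x y U) (w : Fin n → ℝ) :
    subderiv2 ipM (specFn θ) X Y (frm U w) ≤ subderiv2 ipV θ x y w := by
  refine le_of_forall_gt_imp_ge_of_dense fun a ha => ?_
  obtain ⟨t, ws, ht, ht0, hws, hlt⟩ := sub2_seq _ _ _ _ _ _ ha
  have h := sub2_le_liminf ipM (specFn θ) X Y (frm U w) t ht ht0 (fun k => frm U (ws k))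
    (((frm_cont U).tendsto w).comp hws)
  refine h.trans ?_
  have : liminf (fun _ : ℕ => a) atTop = a := Filter.liminf_const a
  rw [← this]
  refine Filter.liminf_le_liminf (Eventually.of_forall fun k => ?_) (by isBoundedDefault)
    (by isBoundedDefault)
  show sdq2 ipM (specFn θ) X Y (t k) (frm U (ws k)) ≤ a
  rw [sdq2_frm hsym hfin hF _ (ht k)]
  exact (hlt k).le

lemma tendsto_of_sq {n : ℕ} (w : Fin n → ℝ) (ws : ℕ → Fin n → ℝ) (ε : ℕ → ℝ)
    (hε : Tendsto ε atTop (𝓝 0)) (h : ∀ᶠ k in atTop, ∑ i, (w i - ws k i) ^ 2 ≤ ε k) :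
    Tendsto ws atTop (𝓝 w) := by
  rw [tendsto_pi_nhds]
  intro i
  have h1 : Tendsto (fun k => (w i - ws k i) ^ 2) atTop (𝓝 0) := by
    refine squeeze_zero' (Eventually.of_forall fun k => sq_nonneg _) ?_ hε
    filter_upwards [h] with k hk
    exact (Finset.single_le_sum (f := fun i => (w i - ws k i) ^ 2) (fun _ _ => sq_nonneg _)
      (Finset.mem_univ i)).trans hk
  have h2 : Tendsto (fun k => |w i - ws k i|) atTop (𝓝 0) := by
    have := (Real.continuous_sqrt.tendsto 0).comp h1
    simpa [Function.comp_def, Real.sqrt_sq_eq_abs] using this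
  have h3 := (tendsto_zero_iff_abs_tendsto_zero _).mpr h2
  have h4 := (tendsto_const_nhds (x := w i)).sub h3
  simpa using h4

lemma hat_conj_frame {n : ℕ} {X Y : Sym n} {x y : Fin n → ℝ} {U : Matrix (Fin n) (Fin n) ℝ}
    (hF : Fr X Y x y U) (t : ℝ) (H : Sym n) (Q : Matrix (Fin n) (Fin n) ℝ) (d : Fin n → ℝ)
    (hZ : (X + t • H).val = Q * diagonal d * Qᵀ) :
    diagonal x + t • hat U H = (Uᵀ * Q) * diagonal d * (Uᵀ * Q)ᵀ := by
  have hX : hat U X = diagonal x := by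
    have e : X = frm U x := Subtype.ext hF.2.1
    rw [e, hat_frm hF.1]
  have : hat U (X + t • H) = diagonal x + t • hat U H := by
    rw [← hX]; unfold hat
    rw [Submodule.coe_add, Submodule.coe_smul]
    simp only [mul_add, add_mul, mul_smul_comm, smul_mul_assoc]
  rw [← this]; unfold hat; rw [hZ]
  simp only [Matrix.transpose_mul, Matrix.transpose_transpose, mul_assoc]

lemma orth_mul {n : ℕ} {U Q : Matrix (Fin n) (Fin n) ℝ} (hU : U * Uᵀ = 1) (hQ : Q * Qᵀ = 1) :
    (Uᵀ * Q) * (Uᵀ * Q)ᵀ = 1 := by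
  rw [Matrix.transpose_mul, Matrix.transpose_transpose, mul_assoc, ← mul_assoc Q, hQ, one_mul,
    orth_comm hU]

lemma quadF_diag {n : ℕ} (x y w : Fin n → ℝ) : quadF x y (diagonal w) = 0 := by
  unfold quadF
  refine Finset.sum_eq_zero fun i _ => Finset.sum_eq_zero fun j _ => ?_
  by_cases h : i = j
  · subst h; simp
  · simp [h]

lemma core2 {n : ℕ} {θ : (Fin n → ℝ) → EReal} (hsym : SymmetricFn θ) {X Y : Sym n}
    (hfin : IsFiniteAt (specFn θ) X) {x y : Fin n → ℝ} {U : Matrix (Fin n) (Fin n) ℝ}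
    (hF : Fr X Y x y U) (w : Fin n → ℝ) (h : ∀ i j, x i = x j → 0 ≤ (y i - y j) * (w i - w j))
    (t : ℕ → ℝ) (ht : ∀ k, 0 < t k) (ht0 : Tendsto t atTop (𝓝 0))
    (Hs : ℕ → Sym n) (hHs : Tendsto Hs atTop (𝓝 (frm U w))) :
    ∃ (ws : ℕ → Fin n → ℝ) (ℓ : ℕ → ℝ), Tendsto ws atTop (𝓝 w) ∧ Tendsto ℓ atTop (𝓝 0) ∧
      ∀ k, sdq2 ipV θ x y (t k) (ws k) + (ℓ k : EReal) ≤ sdq2 ipM (specFn θ) X Y (t k) (Hs k) := by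
  obtain ⟨σ, hσx, hσ⟩ := exists_sort x y w h
  obtain ⟨c, hc0, hc⟩ := exists_large x y σ hσx (fun i j hij he => (hσ i j hij he).1)
  obtain ⟨c', hc0', hc'⟩ := exists_large x w σ hσx (fun i j hij he => (hσ i j hij he).2)
  choose Q d hQ hZ hd using fun k => exists_diag σ (X + t k • Hs k)
  set ws : ℕ → Fin n → ℝ := fun k => (t k)⁻¹ • (d k - x) with hws
  have hdw : ∀ k, x + t k • ws k = d k := by
    intro k
    simp only [hws, smul_smul, mul_inv_cancel₀ (ht k).ne', one_smul, add_sub_cancel]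
  have hwsT : Tendsto ws atTop (𝓝 w) := by
    refine tendsto_of_sq w ws (fun k => ipM (frm U w - Hs k) (frm U w - Hs k)) ?_ ?_
    · have h0 : Tendsto (fun k => frm U w - Hs k) atTop (𝓝 (frm U w - frm U w)) :=
        tendsto_const_nhds.sub hHs
      have := ipM_tendsto h0 h0
      rw [sub_self] at this
      simpa [ipM] using this
    · have hev : ∀ᶠ k in atTop, t k < (c' + 1)⁻¹ :=
        ht0.eventually (gt_mem_nhds (by positivity))
      filter_upwards [hev] with k hk
      have htk := ht k
      have hanti : Antitone ((x + t k • w) ∘ σ) := by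
        have h1 : c' ≤ (t k)⁻¹ := by
          have := (lt_inv_comm₀ htk (by positivity)).mp hk
          linarith
        have h2 := hc' _ h1
        intro i j hij
        have h3 := mul_le_mul_of_nonneg_left (h2 hij) htk.le
        simp only [Function.comp, mul_add] at h3
        rw [mul_inv_cancel_left₀ htk.ne', mul_inv_cancel_left₀ htk.ne'] at h3
        simp only [Function.comp, Pi.add_apply, Pi.smul_apply, smul_eq_mul]
        linarith
      have hh := hoffman _ _ U (Q k) (x + t k • w) (d k) hF.1 (hQ k) σ hanti (hd k)
        (frm_shift hF (t k) w) (hZ k)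
      have e1 : (X + t k • frm U w).val - (X + t k • Hs k).val = t k • (frm U w - Hs k).val := by
        simp only [Submodule.coe_add, Submodule.coe_smul, Submodule.coe_sub, smul_sub]
        abel
      rw [e1, smul_mul_assoc, mul_smul_comm, smul_smul, Matrix.trace_smul, smul_eq_mul] at hh
      have e2 : ∑ i, ((x + t k • w) i - d k i) ^ 2 = (t k * t k) * ∑ i, (w i - ws k i) ^ 2 := by
        rw [Finset.mul_sum]
        refine Finset.sum_congr rfl fun i _ => ?_
        rw [← hdw k]
        simp only [Pi.add_apply, Pi.smul_apply, smul_eq_mul]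
        ring
      rw [e2] at hh
      exact le_of_mul_le_mul_left hh (by positivity)
  obtain ⟨ℓ, hℓ, hle⟩ := core_lower x y w c σ (hc c le_rfl) (diagonal w) (Matrix.diagonal_transpose w)
    (fun i j _ => by rw [Matrix.diagonal_apply]) t ht ht0 (fun k => hat U (Hs k)) (fun k => Uᵀ * Q k) ws
    (by
      have := ((hat_continuous U).tendsto _).comp hHs
      rw [hat_frm hF.1] at this
      exact this) hwsT (fun k => orth_mul hF.1 (hQ k))
    (fun k => by rw [hdw k]; exact hat_conj_frame hF _ _ _ _ (hZ k))
    (fun k => by rw [hdw k]; exact hd k)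
  rw [quadF_diag] at hℓ
  refine ⟨ws, ℓ, hwsT, hℓ, fun k => ?_⟩
  rw [sdq2_rel hsym X Y x y hfin (fr_spec hsym hF) (t k) (ht k) (Hs k) (ws k) (Q k) (hQ k)
    (by rw [hdw k]; exact hZ k)]
  refine add_le_add_right ?_ _
  rw [EReal.coe_le_coe_iff, ip_frame U Y y hF.2.2]
  exact hle k

lemma claim2 {n : ℕ} {θ : (Fin n → ℝ) → EReal} (hsym : SymmetricFn θ) {X Y : Sym n}
    (hprox : ProxSubgrad ipM (specFn θ) X Y) {x y : Fin n → ℝ} {U : Matrix (Fin n) (Fin n) ℝ}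
    (hF : Fr X Y x y U) (w : Fin n → ℝ) :
    subderiv2 ipM (specFn θ) X Y (frm U w) = subderiv2 ipV θ x y w := by
  refine le_antisymm (claim1 hsym hprox.1 hF w) ?_
  refine le_of_forall_gt_imp_ge_of_dense fun a ha => ?_
  have hne : subderiv2 ipM (specFn θ) X Y (frm U w) ≠ ⊤ := (lt_of_lt_of_le ha le_top).ne
  obtain ⟨t, Hs, ht, ht0, hHs, hlt⟩ := sub2_seq _ _ _ _ _ _ ha
  obtain ⟨ws, ℓ, hws, hℓ, hle⟩ := core2 hsym hprox.1 hF w (lemC_swap hsym hprox hF w hne) t ht ht0 Hs hHs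
  have h := sub2_le_liminf ipV θ x y w t ht ht0 ws hws
  refine h.trans ?_
  have hT := tendsto_add_real (fun _ => a) a tendsto_const_nhds (fun k => - ℓ k) (-0) hℓ.neg
  rw [neg_zero, EReal.coe_zero, add_zero] at hT
  rw [← hT.liminf_eq]
  refine Filter.liminf_le_liminf (Eventually.of_forall fun k => ?_) (by isBoundedDefault)
    (by isBoundedDefault)
  exact le_sub_real _ _ _ ((hle k).trans (hlt k).le)

lemma frm_add {n : ℕ} (U : Matrix (Fin n) (Fin n) ℝ) (v w : Fin n → ℝ) :
    frm U (v + w) = frm U v + frm U w := by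
  apply Subtype.ext
  have := diag_add_smul v w 1
  rw [one_smul, one_smul] at this
  rw [Submodule.coe_add, frm_val, frm_val, frm_val, this]
  simp only [mul_add, add_mul]

lemma hat_add {n : ℕ} (U : Matrix (Fin n) (Fin n) ℝ) (A B : Sym n) :
    hat U (A + B) = hat U A + hat U B := by
  unfold hat
  rw [Submodule.coe_add, mul_add, add_mul]

lemma hat_smul {n : ℕ} (U : Matrix (Fin n) (Fin n) ℝ) (c : ℝ) (A : Sym n) :
    hat U (c • A) = c • hat U A := by
  unfold hat
  rw [Submodule.coe_smul, mul_smul_comm, smul_mul_assoc]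

lemma frm_smul {n : ℕ} (U : Matrix (Fin n) (Fin n) ℝ) (c : ℝ) (w : Fin n → ℝ) :
    frm U (c • w) = c • frm U w := by
  apply Subtype.ext
  rw [Submodule.coe_smul, frm_val, frm_val, Matrix.diagonal_smul]
  simp only [mul_smul_comm, smul_mul_assoc]

lemma ip_frm_left {n : ℕ} (U : Matrix (Fin n) (Fin n) ℝ) (A : Sym n) (w : Fin n → ℝ) :
    ipM A (frm U w) = ipV (fun i => hat U A i i) w := by
  rw [ipM_comm, ip_frame U (frm U w) w rfl, ipV]
  exact Finset.sum_congr rfl fun i _ => mul_comm _ _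

theorem dir_g_to_theta {n : ℕ} {θ : (Fin n → ℝ) → EReal} (hsym : SymmetricFn θ) {X Y : Sym n}
    (hprox : ProxSubgrad ipM (specFn θ) X Y) {x y : Fin n → ℝ} {U : Matrix (Fin n) (Fin n) ℝ}
    (hF : Fr X Y x y U) (hg : GenTwiceDiff ipM (specFn θ) X Y) : GenTwiceDiff ipV θ x y := by
  obtain ⟨⟨hfin, hepi⟩, h0, hadd, hsm, L, L1, L2, L3, L4⟩ := hg
  have hc := claim2 hsym hprox hF
  have hxf := fr_spec hsym hF
  refine ⟨⟨?_, ?_⟩, ?_, ?_, ?_, ?_⟩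
  · unfold IsFiniteAt; rw [← hxf]; exact hfin
  · intro t ht ht0 w
    by_cases htop : subderiv2 ipV θ x y w = ⊤
    · exact tendsto_of_top _ _ _ _ _ htop t ht ht0
    · obtain ⟨Hs, hHs, hlim⟩ := hepi t ht ht0 (frm U w)
      rw [hc] at hlim
      obtain ⟨ws, ℓ, hws, hℓ, hle⟩ := core2 hsym hprox.1 hF w
        (lemC_swap hsym hprox hF w (by rw [hc]; exact htop)) t ht ht0 Hs hHs
      have hT := tendsto_add_real _ _ hlim (fun k => - ℓ k) (-0) hℓ.neg
      rw [neg_zero, EReal.coe_zero, add_zero] at hT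
      exact ⟨ws, hws, tendsto_of_limit _ _ _ _ _ t ht ht0 ws hws _ hT
        (fun k => le_sub_real _ _ _ (hle k))⟩
  · rw [← hc]
    have : frm U (0 : Fin n → ℝ) = 0 := by
      have := frm_smul U 0 (0 : Fin n → ℝ); rwa [zero_smul, zero_smul] at this
    rw [this]; exact h0
  · intro v w hv hw
    rw [← hc] at hv hw ⊢
    rw [frm_add]; exact hadd _ _ hv hw
  · intro c w hw
    rw [← hc] at hw ⊢
    rw [frm_smul]; exact hsm _ _ hw
  · refine ⟨fun w i => hat U (L (frm U w)) i i, ?_, ?_, ?_, ?_⟩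
    · intro v w hv hw
      rw [← hc] at hv hw
      funext i
      show hat U (L (frm U (v + w))) i i = hat U (L (frm U v)) i i + hat U (L (frm U w)) i i
      rw [frm_add, L1 _ _ hv hw, hat_add, Matrix.add_apply]
    · intro c w hw
      rw [← hc] at hw
      funext i
      show hat U (L (frm U (c • w))) i i = c * hat U (L (frm U w)) i i
      rw [frm_smul, L2 _ _ hw, hat_smul, Matrix.smul_apply, smul_eq_mul]
    · intro v w hv hw
      rw [← hc] at hv hw
      have := L3 _ _ hv hw
      rw [ip_frm_left, ipM_comm, ip_frm_left] at this
      rw [this, ipV, ipV]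
      exact Finset.sum_congr rfl fun i _ => mul_comm _ _
    · intro w hw
      rw [← hc] at hw ⊢
      rw [L4 _ hw, ip_frm_left]

lemma orth_entry {n : ℕ} {Q : Matrix (Fin n) (Fin n) ℝ} (hQ : Q * Qᵀ = 1) (i j : Fin n) :
    Q i j ∈ Set.Icc (-1 : ℝ) 1 := by
  have h := congrFun (congrFun hQ i) i
  rw [Matrix.mul_apply, Matrix.one_apply_eq] at h
  simp only [Matrix.transpose_apply] at h
  have h2 := Finset.single_le_sum (f := fun j => Q i j * Q i j) (fun _ _ => mul_self_nonneg _)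
    (Finset.mem_univ j)
  rw [h] at h2
  constructor <;> nlinarith

lemma val_tendsto {n : ℕ} {As : ℕ → Sym n} {A : Sym n} (hA : Tendsto As atTop (𝓝 A)) :
    Tendsto (fun k => (As k).val) atTop (𝓝 A.val) :=
  (continuous_subtype_val.tendsto A).comp hA

lemma transpose_tendsto {n : ℕ} {As : ℕ → Matrix (Fin n) (Fin n) ℝ} {A : Matrix (Fin n) (Fin n) ℝ}
    (hA : Tendsto As atTop (𝓝 A)) : Tendsto (fun k => (As k)ᵀ) atTop (𝓝 Aᵀ) := by
  have hc : Continuous (fun A : Matrix (Fin n) (Fin n) ℝ => Aᵀ) := continuous_id.matrix_transpose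
  exact (hc.tendsto A).comp hA

lemma diagonal_tendsto {n : ℕ} {ws : ℕ → Fin n → ℝ} {w : Fin n → ℝ}
    (h : Tendsto ws atTop (𝓝 w)) :
    Tendsto (fun k => (diagonal (ws k) : Matrix (Fin n) (Fin n) ℝ)) atTop (𝓝 (diagonal w)) := by
  have hc : Continuous (fun w : Fin n → ℝ => (diagonal w : Matrix (Fin n) (Fin n) ℝ)) :=
    Continuous.matrix_diagonal continuous_id
  exact (hc.tendsto w).comp h

lemma entry_tendsto {n : ℕ} {As : ℕ → Matrix (Fin n) (Fin n) ℝ} {A : Matrix (Fin n) (Fin n) ℝ}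
    (hA : Tendsto As atTop (𝓝 A)) (i j : Fin n) : Tendsto (fun k => As k i j) atTop (𝓝 (A i j)) := by
  have hc : Continuous (fun A : Matrix (Fin n) (Fin n) ℝ => A i j) := by fun_prop
  exact (hc.tendsto A).comp hA

lemma struct {n : ℕ} {X Y : Sym n} {x y : Fin n → ℝ} {U : Matrix (Fin n) (Fin n) ℝ}
    (hF : Fr X Y x y U) (σ : Equiv.Perm (Fin n)) (hσ : Antitone (x ∘ σ))
    (t : ℕ → ℝ) (ht : ∀ k, 0 < t k) (ht0 : Tendsto t atTop (𝓝 0))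
    (Hs : ℕ → Sym n) (H : Sym n) (hHs : Tendsto Hs atTop (𝓝 H)) :
    ∃ (φ : ℕ → ℕ) (Qs : ℕ → Matrix (Fin n) (Fin n) ℝ) (ws : ℕ → Fin n → ℝ)
      (Q : Matrix (Fin n) (Fin n) ℝ) (w : Fin n → ℝ), StrictMono φ ∧
      (∀ k, Qs k * (Qs k)ᵀ = 1) ∧
      (∀ k, (X + t (φ k) • Hs (φ k)).val = Qs k * diagonal (x + t (φ k) • ws k) * (Qs k)ᵀ) ∧
      (∀ k, Antitone ((x + t (φ k) • ws k) ∘ σ)) ∧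
      Tendsto ws atTop (𝓝 w) ∧ Q * Qᵀ = 1 ∧ X.val = Q * diagonal x * Qᵀ ∧
      BlockDiag x w (hat Q H) := by
  choose Q d hQ hZ hd using fun k => exists_diag σ (X + t k • Hs k)
  set ws : ℕ → Fin n → ℝ := fun k => (t k)⁻¹ • (d k - x) with hws
  have hdw : ∀ k, x + t k • ws k = d k := by
    intro k
    simp only [hws, smul_smul, mul_inv_cancel₀ (ht k).ne', one_smul, add_sub_cancel]
  have hbd : ∀ k, ∑ i, ws k i ^ 2 ≤ ipM (Hs k) (Hs k) := by
    intro k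
    have htk := ht k
    have hh := hoffman _ _ U (Q k) x (d k) hF.1 (hQ k) σ hσ (hd k) hF.2.1 (hZ k)
    have e1 : X.val - (X + t k • Hs k).val = (-t k) • (Hs k).val := by
      simp only [Submodule.coe_add, Submodule.coe_smul, neg_smul]
      abel
    rw [e1, smul_mul_assoc, mul_smul_comm, smul_smul, Matrix.trace_smul, smul_eq_mul] at hh
    have e2 : ∑ i, (x i - d k i) ^ 2 = (-t k * -t k) * ∑ i, ws k i ^ 2 := by
      rw [Finset.mul_sum]
      refine Finset.sum_congr rfl fun i _ => ?_
      rw [← hdw k]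
      simp only [Pi.add_apply, Pi.smul_apply, smul_eq_mul]
      ring
    rw [e2] at hh
    exact le_of_mul_le_mul_left hh (by nlinarith)
  obtain ⟨C, hC⟩ := (ipM_tendsto hHs hHs).bddAbove_range
  have hC' : ∀ k, ipM (Hs k) (Hs k) ≤ C := fun k => hC ⟨k, rfl⟩
  have hwb : ∀ k i, ws k i ∈ Set.Icc (-(C + 1)) (C + 1) := by
    intro k i
    have h1 := (Finset.single_le_sum (f := fun i => ws k i ^ 2) (fun _ _ => sq_nonneg _)
      (Finset.mem_univ i)).trans ((hbd k).trans (hC' k))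
    constructor <;> nlinarith [sq_nonneg (ws k i)]
  set K : Set ((Fin n → Fin n → ℝ) × (Fin n → ℝ)) :=
    (Set.univ.pi fun _ => Set.univ.pi fun _ => Set.Icc (-1 : ℝ) 1) ×ˢ
      (Set.univ.pi fun _ => Set.Icc (-(C + 1)) (C + 1)) with hK
  have hKc : IsCompact K :=
    (isCompact_univ_pi fun _ => isCompact_univ_pi fun _ => isCompact_Icc).prod
      (isCompact_univ_pi fun _ => isCompact_Icc)
  obtain ⟨⟨Q₀, w⟩, -, φ, hφ, hlim⟩ := 
    hKc.tendsto_subseq (x := fun k => ((fun i j => Q k i j : Fin n → Fin n → ℝ), ws k))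
    (fun k => ⟨fun i _ j _ => orth_entry (hQ k) i j, fun i _ => hwb k i⟩)
  have hQt : Tendsto (fun k => Q (φ k)) atTop (𝓝 (Q₀ : Matrix (Fin n) (Fin n) ℝ)) :=
    (continuous_fst.tendsto _).comp hlim
  have hwt : Tendsto (fun k => ws (φ k)) atTop (𝓝 w) := (continuous_snd.tendsto _).comp hlim
  set Q' : Matrix (Fin n) (Fin n) ℝ := Q₀ with hQ'
  have hφt := hφ.tendsto_atTop
  have htφ := ht0.comp hφt
  have hHφ := hHs.comp hφt
  have hQQ : Q' * Q'ᵀ = 1 := by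
    have h1 := hQt.mul (transpose_tendsto hQt)
    have h2 : (fun k => Q (φ k) * (Q (φ k))ᵀ) = fun _ => (1 : Matrix (Fin n) (Fin n) ℝ) :=
      funext fun k => hQ _
    rw [h2] at h1
    exact (tendsto_nhds_unique h1 tendsto_const_nhds)
  have hXQ : X.val = Q' * diagonal x * Q'ᵀ := by
    have h0 : Tendsto (fun k => x + t (φ k) • ws (φ k)) atTop (𝓝 (x + (0 : ℝ) • w)) :=
      (htφ.smul hwt).const_add x
    rw [zero_smul, add_zero] at h0
    have h1 := (hQt.mul (diagonal_tendsto h0)).mul (transpose_tendsto hQt)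
    have h2 : Tendsto (fun k => X.val + t (φ k) • (Hs (φ k)).val) atTop (𝓝 (X.val + (0 : ℝ) • H.val)) :=
      (htφ.smul (val_tendsto hHφ)).const_add X.val
    rw [zero_smul, add_zero] at h2
    refine tendsto_nhds_unique h2 (h1.congr fun k => ?_)
    rw [hdw, ← hZ]; rfl
  refine ⟨φ, fun k => Q (φ k), fun k => ws (φ k), Q', w, hφ, fun k => hQ _, fun k => by rw [hdw]; exact hZ _,
    fun k => by rw [hdw]; exact hd _, hwt, hQQ, hXQ, ?_⟩
  intro i j hij
  have hN : Tendsto (fun k => Q'ᵀ * Q (φ k)) atTop (𝓝 1) := by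
    have := hQt.const_mul Q'ᵀ
    rwa [orth_comm hQQ] at this
  have hA : Tendsto (fun k => Q'ᵀ * (Hs (φ k)).val * Q (φ k)) atTop (𝓝 (hat Q' H)) :=
    ((val_tendsto hHφ).const_mul Q'ᵀ).mul hQt
  have key : ∀ k, (Q'ᵀ * (Hs (φ k)).val * Q (φ k)) i j = (Q'ᵀ * Q (φ k)) i j * ws (φ k) j := by
    intro k
    have htk := (ht (φ k)).ne'
    have e1 : Q'ᵀ * (X + t (φ k) • Hs (φ k)).val * Q (φ k)
        = Q'ᵀ * Q (φ k) * diagonal (x + t (φ k) • ws (φ k)) := by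
      rw [hZ, hdw]
      calc Q'ᵀ * (Q (φ k) * diagonal (d (φ k)) * (Q (φ k))ᵀ) * Q (φ k)
          = Q'ᵀ * Q (φ k) * diagonal (d (φ k)) * ((Q (φ k))ᵀ * Q (φ k)) := by simp only [mul_assoc]
        _ = _ := by rw [orth_comm (hQ _), mul_one]
    have e2 : Q'ᵀ * (X + t (φ k) • Hs (φ k)).val * Q (φ k)
        = diagonal x * (Q'ᵀ * Q (φ k)) + t (φ k) • (Q'ᵀ * (Hs (φ k)).val * Q (φ k)) := by
      rw [Submodule.coe_add, Submodule.coe_smul, mul_add, add_mul, mul_smul_comm, smul_mul_assoc]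
      congr 1
      rw [hXQ]
      calc Q'ᵀ * (Q' * diagonal x * Q'ᵀ) * Q (φ k)
          = (Q'ᵀ * Q') * diagonal x * (Q'ᵀ * Q (φ k)) := by simp only [mul_assoc]
        _ = _ := by rw [orth_comm hQQ, one_mul]
    have e3 := congrFun (congrFun (e2.symm.trans e1) i) j
    rw [Matrix.add_apply, Matrix.diagonal_mul, Matrix.smul_apply, Matrix.mul_diagonal] at e3
    simp only [Pi.add_apply, Pi.smul_apply, smul_eq_mul] at e3
    rw [hij] at e3
    refine mul_left_cancel₀ htk ?_
    linarith
  have l1 := entry_tendsto hA i j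
  have l2 := (entry_tendsto hN i j).mul ((tendsto_pi_nhds.mp hwt) j)
  have := tendsto_nhds_unique l1 (l2.congr fun k => (key k).symm)
  rw [this, Matrix.one_apply]
  split_ifs with h
  · rw [h, one_mul]
  · rw [zero_mul]

/-- Crude lower bound on the gap. -/
lemma crude {n : ℕ} {X Y : Sym n} {x y : Fin n → ℝ} {U : Matrix (Fin n) (Fin n) ℝ}
    (hF : Fr X Y x y U) (σ : Equiv.Perm (Fin n)) (c : ℝ)
    (hv : Antitone ((fun i => y i + c * x i) ∘ σ)) (t : ℝ) (ht : 0 < t) (H : Sym n)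
    (Q : Matrix (Fin n) (Fin n) ℝ) (w : Fin n → ℝ) (hQ : Q * Qᵀ = 1)
    (hZ : (X + t • H).val = Q * diagonal (x + t • w) * Qᵀ)
    (hd : Antitone ((x + t • w) ∘ σ)) :
    c * (ipV w w - ipM H H) ≤ 2 / t * (ipV y w - ipM Y H) := by
  have h1 := vonNeumann U Q _ _ hF.1 hQ σ hv hd
  have h2 := trace_sq_diag Q (x + t • w) hQ
  have h3 := trace_sq_diag U x hF.1
  rw [← hZ] at h1 h2
  rw [← hF.2.1] at h3
  have e1 : U * diagonal (fun i => y i + c * x i) * Uᵀ = Y.val + c • X.val := by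
    rw [hF.2.1, hF.2.2, show (fun i => y i + c * x i) = y + c • x from rfl, diag_add_smul]
    simp only [mul_add, add_mul, mul_smul_comm, smul_mul_assoc]
  have e2 : (Y.val * X.val).trace = ∑ i, y i * x i := by
    have e : X = frm U x := Subtype.ext hF.2.1
    have := ip_frm hF x
    rw [← e] at this; exact this
  rw [e1] at h1
  have e3 : ((Y.val + c • X.val) * (X + t • H).val).trace
      = (Y.val * X.val).trace + t * ipM Y H + c * (X.val * X.val).trace + c * t * ipM X H := by
    unfold ipM
    rw [Submodule.coe_add, Submodule.coe_smul]
    simp only [mul_add, add_mul, mul_smul_comm, smul_mul_assoc, Matrix.trace_add, Matrix.trace_smul,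
      smul_eq_mul]
    ring
  have e4 : ((X + t • H).val * (X + t • H).val).trace
      = (X.val * X.val).trace + 2 * t * ipM X H + t ^ 2 * ipM H H := by
    have := Matrix.trace_mul_comm H.val X.val
    unfold ipM
    rw [Submodule.coe_add, Submodule.coe_smul]
    simp only [mul_add, add_mul, mul_smul_comm, smul_mul_assoc, Matrix.trace_add, Matrix.trace_smul,
      smul_eq_mul, this]
    ring
  have e5 : ∑ i, (y i + c * x i) * (x + t • w) i
      = ∑ i, y i * x i + t * ipV y w + c * ∑ i, x i ^ 2 + c * t * ipV x w := by
    unfold ipV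
    simp only [Finset.mul_sum, ← Finset.sum_add_distrib]
    refine Finset.sum_congr rfl fun i _ => ?_
    simp only [Pi.add_apply, Pi.smul_apply, smul_eq_mul]; ring
  have e6 : ∑ i, (x + t • w) i ^ 2 = ∑ i, x i ^ 2 + 2 * t * ipV x w + t ^ 2 * ipV w w := by
    unfold ipV
    simp only [Finset.mul_sum, ← Finset.sum_add_distrib]
    refine Finset.sum_congr rfl fun i _ => ?_
    simp only [Pi.add_apply, Pi.smul_apply, smul_eq_mul]; ring
  rw [e3, e5, e2, h3] at h1
  rw [e4, e6, h3] at h2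
  rw [div_mul_eq_mul_div, le_div_iff₀ ht]
  have h2' : 2 * (ipM X H - ipV x w) = t * (ipV w w - ipM H H) := by
    have : t * (2 * (ipM X H - ipV x w)) = t * (t * (ipV w w - ipM H H)) := by linarith
    exact mul_left_cancel₀ ht.ne' this
  have h1' : ipM Y H + c * ipM X H ≤ ipV y w + c * ipV x w := by
    have : t * (ipM Y H + c * ipM X H) ≤ t * (ipV y w + c * ipV x w) := by linarith
    exact le_of_mul_le_mul_left this ht
  have : c * (2 * (ipM X H - ipV x w)) = c * (t * (ipV w w - ipM H H)) := by rw [h2']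
  linarith

/-- Abstract properties of the domain `S` and of the operator `L` of the second subderivative
of `θ`. -/
structure Alg {n : ℕ} (x y : Fin n → ℝ) (S : (Fin n → ℝ) → Prop)
    (L : (Fin n → ℝ) → (Fin n → ℝ)) : Prop where
  zero : S 0
  add : ∀ u v, S u → S v → S (u + v)
  smul : ∀ (c : ℝ) u, S u → S (c • u)
  Ladd : ∀ u v, S u → S v → L (u + v) = L u + L v
  Lsmul : ∀ (c : ℝ) u, S u → L (c • u) = c • L u
  Lsym : ∀ u v, S u → S v → ipV (L u) v = ipV u (L v)
  a1 : ∀ w i j, S w → x i = x j → y i ≠ y j → w i = w j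
  a2 : ∀ w i j, S w → x i = x j → y i = y j →
    S (w ∘ Equiv.swap i j) ∧ ipV (L (w ∘ Equiv.swap i j)) (w ∘ Equiv.swap i j) = ipV (L w) w

def EE {n : ℕ} (i j : Fin n) : Fin n → ℝ := Pi.single i 1 - Pi.single j 1

lemma EE_swap {n : ℕ} (i j a b : Fin n) :
    EE i j ∘ Equiv.swap a b = EE (Equiv.swap a b i) (Equiv.swap a b j) := by
  funext k
  simp only [EE, Function.comp, Pi.sub_apply, Pi.single_apply]
  have h : ∀ i : Fin n, (Equiv.swap a b k = i) ↔ (k = Equiv.swap a b i) := by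
    intro i
    constructor
    · rintro rfl; simp
    · rintro rfl; simp
  simp only [h]

lemma EE_self {n : ℕ} (i : Fin n) : EE i i = 0 := sub_self _

lemma sub_swap {n : ℕ} (u : Fin n → ℝ) (i j : Fin n) :
    u - u ∘ Equiv.swap i j = (u i - u j) • EE i j := by
  funext k
  simp only [EE, Function.comp, Pi.sub_apply, Pi.single_apply, Pi.smul_apply, smul_eq_mul,
    Equiv.swap_apply_def]
  by_cases h1 : k = i
  · subst h1
    by_cases h2 : k = j
    · subst h2; simp
    · simp [h2]
  · by_cases h2 : k = j
    · subst h2; simp [h1]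
    · simp [h1, h2]

lemma ipV_add_left {n : ℕ} (u v w : Fin n → ℝ) : ipV (u + v) w = ipV u w + ipV v w := by
  simp [ipV, add_mul, Finset.sum_add_distrib]
lemma ipV_add_right {n : ℕ} (u v w : Fin n → ℝ) : ipV u (v + w) = ipV u v + ipV u w := by
  simp [ipV, mul_add, Finset.sum_add_distrib]
lemma ipV_smul_left {n : ℕ} (c : ℝ) (u w : Fin n → ℝ) : ipV (c • u) w = c * ipV u w := by
  simp [ipV, mul_assoc, Finset.mul_sum]
lemma ipV_smul_right {n : ℕ} (c : ℝ) (u w : Fin n → ℝ) : ipV u (c • w) = c * ipV u w := by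
  simp only [ipV, Finset.mul_sum, Pi.smul_apply, smul_eq_mul]
  exact Finset.sum_congr rfl fun i _ => by ring
lemma ipV_sym {n : ℕ} (u w : Fin n → ℝ) : ipV u w = ipV w u := by
  simp [ipV, mul_comm]
lemma ipV_sum_right {n : ℕ} (u : Fin n → ℝ) (f : Fin n → Fin n → ℝ) :
    ipV u (∑ i, f i) = ∑ i, ipV u (f i) := by
  simp only [ipV, Finset.sum_apply, Finset.mul_sum]
  exact Finset.sum_comm

namespace Alg
variable {n : ℕ} {x y : Fin n → ℝ} {S : (Fin n → ℝ) → Prop} {L : (Fin n → ℝ) → (Fin n → ℝ)}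

lemma sub (hA : Alg x y S L) (u v : Fin n → ℝ) (hu : S u) (hv : S v) : S (u - v) := by
  have := hA.add u ((-1 : ℝ) • v) hu (hA.smul _ _ hv)
  rwa [neg_one_smul, ← sub_eq_add_neg] at this

lemma Bsymm (hA : Alg x y S L) (u v : Fin n → ℝ) (hu : S u) (hv : S v) :
    ipV (L u) v = ipV (L v) u := by
  rw [hA.Lsym u v hu hv, ipV_sym]

lemma Bquad (hA : Alg x y S L) (u v : Fin n → ℝ) (hu : S u) (hv : S v) :
    ipV (L (u + v)) (u + v) = ipV (L u) u + 2 * ipV (L u) v + ipV (L v) v := by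
  rw [hA.Ladd u v hu hv, ipV_add_left, ipV_add_right, ipV_add_right, hA.Bsymm v u hv hu]
  ring

lemma sw (hA : Alg x y S L) (w : Fin n → ℝ) (i j : Fin n) (hw : S w) (hx : x i = x j) :
    S (w ∘ Equiv.swap i j) ∧ ipV (L (w ∘ Equiv.swap i j)) (w ∘ Equiv.swap i j) = ipV (L w) w := by
  by_cases hy : y i = y j
  · exact hA.a2 w i j hw hx hy
  · have h := hA.a1 w i j hw hx hy
    have e := sub_swap w i j
    rw [h, sub_self, zero_smul, sub_eq_zero] at e
    rw [← e]
    exact ⟨hw, rfl⟩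

lemma swB (hA : Alg x y S L) (u v : Fin n → ℝ) (i j : Fin n) (hu : S u) (hv : S v) (hx : x i = x j) :
    ipV (L (u ∘ Equiv.swap i j)) (v ∘ Equiv.swap i j) = ipV (L u) v := by
  obtain ⟨su, qu⟩ := hA.sw u i j hu hx
  obtain ⟨sv, qv⟩ := hA.sw v i j hv hx
  obtain ⟨suv, quv⟩ := hA.sw (u + v) i j (hA.add u v hu hv) hx
  have e : (u + v) ∘ Equiv.swap i j = u ∘ Equiv.swap i j + v ∘ Equiv.swap i j := rfl
  rw [e, hA.Bquad _ _ su sv, hA.Bquad _ _ hu hv] at quv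
  linarith

lemma move (hA : Alg x y S L) (i j k l : Fin n) (hij : i ≠ j) (hkl : k ≠ l) (h1 : x i = x j)
    (h2 : x k = x i) (h3 : x l = x i) (h : S (EE i j)) :
    S (EE k l) ∧ ipV (L (EE k l)) (EE k l) = ipV (L (EE i j)) (EE i j) := by
  obtain ⟨s1, q1⟩ := hA.sw (EE i j) i k h h2.symm
  rw [EE_swap, Equiv.swap_apply_left] at s1 q1
  set j' := Equiv.swap i k j with hj'
  have hj'k : j' ≠ k := by
    intro hh
    have := congrArg (Equiv.swap i k) hh
    rw [hj', Equiv.swap_apply_self, Equiv.swap_apply_right] at this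
    exact hij this.symm
  have hxj' : x j' = x i := by
    rw [hj', Equiv.swap_apply_def]
    split_ifs with a b
    · exact h2
    · rfl
    · exact h1.symm
  obtain ⟨s2, q2⟩ := hA.sw (EE k j') j' l s1 (hxj'.trans h3.symm)
  rw [EE_swap, Equiv.swap_apply_left, Equiv.swap_apply_of_ne_of_ne hj'k.symm hkl] at s2 q2
  exact ⟨s2, q2.trans q1⟩

end Alg

def Free {n : ℕ} (x : Fin n → ℝ) (S : (Fin n → ℝ) → Prop) (s : ℝ) : Prop :=
  ∃ i j, i ≠ j ∧ x i = s ∧ x j = s ∧ S (EE i j)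

/-- Second layer of algebraic properties. -/
structure Alg2 {n : ℕ} (x y : Fin n → ℝ) (S : (Fin n → ℝ) → Prop)
    (L : (Fin n → ℝ) → (Fin n → ℝ)) (Fs : ℝ → Prop) (γ : ℝ → ℝ) : Prop where
  alg : Alg x y S L
  f1 : ∀ k l, Fs (x k) → x k = x l → S (EE k l)
  f2 : ∀ k l, Fs (x k) → x k = x l → y k = y l
  f3 : ∀ w i j, S w → ¬ Fs (x i) → x i = x j → w i = w j
  f4 : ∀ u i j, S u → Fs (x i) → x i = x j → ipV (L u) (EE i j) = γ (x i) * (u i - u j)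

lemma Alg.alg2 {n : ℕ} {x y : Fin n → ℝ} {S : (Fin n → ℝ) → Prop} {L : (Fin n → ℝ) → (Fin n → ℝ)}
    (hA : Alg x y S L) : ∃ (Fs : ℝ → Prop) (γ : ℝ → ℝ), Alg2 x y S L Fs γ := by
  have hγ : ∀ s, ∃ c : ℝ, ∀ k l, k ≠ l → x k = s → x l = s → S (EE k l) →
      ipV (L (EE k l)) (EE k l) = 2 * c := by
    intro s
    by_cases h : Free x S s
    · obtain ⟨i, j, hij, hi, hj, hs⟩ := h
      refine ⟨ipV (L (EE i j)) (EE i j) / 2, fun k l hkl hk hl _ => ?_⟩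
      rw [(hA.move i j k l hij hkl (hi.trans hj.symm) (hk.trans hi.symm) (hl.trans hi.symm) hs).2]
      ring
    · exact ⟨0, fun k l hkl hk hl hs => absurd ⟨k, l, hkl, hk, hl, hs⟩ h⟩
  choose γ hγ using hγ
  have f1 : ∀ k l, Free x S (x k) → x k = x l → S (EE k l) := by
    rintro k l ⟨i, j, hij, hi, hj, hs⟩ hkl
    by_cases h : k = l
    · subst h; rw [EE_self]; exact hA.zero
    · exact (hA.move i j k l hij h (hi.trans hj.symm) hi.symm (hkl.symm.trans hi.symm) hs).1
  refine ⟨Free x S, γ, hA, f1, ?_, ?_, ?_⟩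
  · intro k l hf hkl
    by_contra hy
    have h := hA.a1 _ k l (f1 k l hf hkl) hkl hy
    have hne : k ≠ l := fun e => hy (by rw [e])
    simp [EE, hne, hne.symm] at h
    norm_num at h
  · intro w i j hw hf hij
    by_contra hne
    apply hf
    refine ⟨i, j, fun e => hne (by rw [e]), rfl, hij.symm, ?_⟩
    have h := hA.sub _ _ hw (hA.sw w i j hw hij).1
    rw [sub_swap] at h
    have h2 := hA.smul (w i - w j)⁻¹ _ h
    rwa [smul_smul, inv_mul_cancel₀ (sub_ne_zero.mpr hne), one_smul] at h2
  · intro u i j hu hf hij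
    by_cases h : i = j
    · subst h; rw [EE_self]; simp [ipV]
    have hE := f1 i j hf hij
    have hsw := (hA.sw u i j hu hij).1
    have e1 := hA.swB u (EE i j) i j hu hE hij
    have e2 : EE i j ∘ Equiv.swap i j = (-1 : ℝ) • EE i j := by
      rw [EE_swap, Equiv.swap_apply_left, Equiv.swap_apply_right]; simp [EE]
    rw [e2, ipV_smul_right] at e1
    have e3 : u = (u i - u j) • EE i j + u ∘ Equiv.swap i j := by rw [← sub_swap]; simp
    have e4 : ipV (L u) (EE i j)
        = (u i - u j) * (2 * γ (x i)) + ipV (L (u ∘ Equiv.swap i j)) (EE i j) := by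
      conv_lhs => rw [e3]
      rw [hA.Ladd _ _ (hA.smul _ _ hE) hsw, hA.Lsmul _ _ hE, ipV_add_left, ipV_smul_left,
        hγ (x i) i j h rfl hij.symm hE]
    linarith

namespace Alg2
variable {n : ℕ} {x y : Fin n → ℝ} {S : (Fin n → ℝ) → Prop} {L : (Fin n → ℝ) → (Fin n → ℝ)}
  {Fs : ℝ → Prop} {γ : ℝ → ℝ}

lemma decomp (hA : Alg2 x y S L Fs γ) (δ : Fin n → ℝ) (h1 : ∀ β : ℝ → ℝ, ∑ i, β (x i) * δ i = 0)
    (h2 : ∀ i, ¬ Fs (x i) → δ i = 0) :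
    S δ ∧ ∀ u, S u → ipV (L u) δ = ∑ i, γ (x i) * u i * δ i := by
  rcases isEmpty_or_nonempty (Fin n) with hn | hn
  · have : δ = 0 := Subsingleton.elim _ _
    subst this
    exact ⟨hA.alg.zero, fun u _ => by simp [ipV]⟩
  set ρ : ℝ → Fin n := Function.invFun x with hρ
  have hxρ : ∀ i, x (ρ (x i)) = x i := fun i => Function.invFun_eq ⟨i, rfl⟩
  have hδ : δ = ∑ i, δ i • EE i (ρ (x i)) := by
    funext k
    have hk := h1 (fun s => if ρ s = k then 1 else 0)
    simp only [Finset.sum_apply, Pi.smul_apply, smul_eq_mul, EE, Pi.sub_apply, Pi.single_apply,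
      mul_sub, Finset.sum_sub_distrib]
    have e1 : ∑ i, δ i * (if k = ρ (x i) then 1 else 0) = 0 := by
      refine Eq.trans (Finset.sum_congr rfl fun i _ => ?_) hk
      simp only [eq_comm, mul_comm]
    rw [e1]
    simp
  constructor
  · rw [hδ]
    refine Finset.sum_induction _ S (fun a b ha hb => hA.alg.add a b ha hb) hA.alg.zero fun i _ => ?_
    by_cases hf : Fs (x i)
    · exact hA.alg.smul _ _ (hA.f1 _ _ hf (hxρ i).symm)
    · rw [h2 i hf, zero_smul]; exact hA.alg.zero
  · intro u hu
    have e0 : ipV (L u) δ = ∑ i, δ i * ipV (L u) (EE i (ρ (x i))) := by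
      conv_lhs => rw [hδ]
      rw [ipV_sum_right]
      simp only [ipV_smul_right]
    have e1 : ∀ i, δ i * ipV (L u) (EE i (ρ (x i)))
        = γ (x i) * u i * δ i - (γ (x i) * u (ρ (x i))) * δ i := by
      intro i
      by_cases hf : Fs (x i)
      · rw [hA.f4 u i _ hu hf (hxρ i).symm]; ring
      · rw [h2 i hf]; ring
    rw [e0]
    simp only [e1, Finset.sum_sub_distrib]
    rw [h1 (fun s => γ s * u (ρ s)), sub_zero]

lemma transfer (hA : Alg2 x y S L Fs γ) (d w : Fin n → ℝ) (hd : S d)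
    (h1 : ∀ β : ℝ → ℝ, ∑ i, β (x i) * w i = ∑ i, β (x i) * d i)
    (h2 : ∀ i, ¬ Fs (x i) → w i = d i) :
    S w ∧ ipV (L w) w - ∑ i, γ (x i) * w i ^ 2 = ipV (L d) d - ∑ i, γ (x i) * d i ^ 2 := by
  obtain ⟨s, q⟩ := hA.decomp (w - d)
    (fun β => by simp only [Pi.sub_apply, mul_sub, Finset.sum_sub_distrib, h1, sub_self])
    (fun i hi => by rw [Pi.sub_apply, h2 i hi, sub_self])
  have e : w = d + (w - d) := by simp
  have hw : S w := by rw [e]; exact hA.alg.add _ _ hd s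
  refine ⟨hw, ?_⟩
  have e2 : ipV (L w) w = ipV (L d) d + 2 * ipV (L d) (w - d) + ipV (L (w - d)) (w - d) := by
    conv_lhs => rw [e]
    exact hA.alg.Bquad d (w - d) hd s
  rw [e2, q d hd, q _ s]
  have e3 : ∑ i, γ (x i) * w i ^ 2 = ∑ i, γ (x i) * d i ^ 2 + 2 * ∑ i, γ (x i) * d i * (w - d) i
      + ∑ i, γ (x i) * (w - d) i * (w - d) i := by
    simp only [Finset.mul_sum, ← Finset.sum_add_distrib]
    refine Finset.sum_congr rfl fun i _ => ?_
    simp only [Pi.sub_apply]; ring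
  rw [e3]; ring

lemma nonfree (hA : Alg2 x y S L Fs γ) (d w : Fin n → ℝ) (hd : S d) (hw : S w)
    (h1 : ∀ β : ℝ → ℝ, ∑ i, β (x i) * w i = ∑ i, β (x i) * d i) (i : Fin n) (hi : ¬ Fs (x i)) :
    w i = d i := by
  have hs := hA.alg.sub w d hw hd
  have h0 := h1 (fun s => if s = x i then 1 else 0)
  have hc : ∀ j, x j = x i → (w - d) j = (w - d) i := fun j hj =>
    (hA.f3 (w - d) i j hs hi hj.symm).symm
  have e : ∑ j, (if x j = x i then (1 : ℝ) else 0) * ((w - d) i) ^ 2 = 0 := by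
    have : ∑ j, (if x j = x i then (1 : ℝ) else 0) * ((w - d) i) ^ 2
        = (∑ j, (if x j = x i then (1 : ℝ) else 0) * w j
          - ∑ j, (if x j = x i then (1 : ℝ) else 0) * d j) * (w - d) i := by
      rw [← Finset.sum_sub_distrib, Finset.sum_mul]
      refine Finset.sum_congr rfl fun j _ => ?_
      split_ifs with h
      · have := hc j h
        simp only [Pi.sub_apply] at this ⊢
        rw [← this]; ring
      · ring
    rw [this, h0, sub_self, zero_mul]
  have h2 := (Finset.sum_eq_zero_iff_of_nonneg (fun j _ => by positivity)).mp e i (Finset.mem_univ i)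
  simp at h2
  linarith

end Alg2

lemma swap_inv {n : ℕ} (x : Fin n → ℝ) (i j : Fin n) (h : x i = x j) :
    (fun k => x (Equiv.swap i j k)) = x := by
  have e := sub_swap x i j
  rw [h, sub_self, zero_smul, sub_eq_zero] at e
  exact e.symm

lemma sdq2_swap {n : ℕ} {θ : (Fin n → ℝ) → EReal} (hsym : SymmetricFn θ) (x y : Fin n → ℝ)
    (i j : Fin n) (hx : x i = x j) (hy : y i = y j) (t : ℝ) (w : Fin n → ℝ) :
    sdq2 ipV θ x y t (w ∘ Equiv.swap i j) = sdq2 ipV θ x y t w := by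
  unfold sdq2
  have e1 : θ (x + t • (w ∘ Equiv.swap i j)) = θ (x + t • w) := by
    rw [← hsym (x + t • w) (Equiv.swap i j)]
    congr 1
    funext k
    have := congrFun (swap_inv x i j hx) k
    simp only [Pi.add_apply, Pi.smul_apply, Function.comp] at this ⊢
    rw [this]
  have e2 : ipV y (w ∘ Equiv.swap i j) = ipV y w := by
    unfold ipV
    rw [← Equiv.sum_comp (Equiv.swap i j) (fun k => y k * w k)]
    refine Finset.sum_congr rfl fun k _ => ?_
    have := congrFun (swap_inv y i j hy) k
    simp only [Function.comp] at this ⊢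
    rw [this]
  rw [e1, e2]

lemma sub2_swap_le {n : ℕ} {θ : (Fin n → ℝ) → EReal} (hsym : SymmetricFn θ) (x y : Fin n → ℝ)
    (i j : Fin n) (hx : x i = x j) (hy : y i = y j) (w : Fin n → ℝ) :
    subderiv2 ipV θ x y (w ∘ Equiv.swap i j) ≤ subderiv2 ipV θ x y w := by
  refine le_of_forall_gt_imp_ge_of_dense fun a ha => ?_
  obtain ⟨t, ws, ht, ht0, hws, hlt⟩ := sub2_seq ipV θ x y w a ha
  have hws' : Tendsto (fun k => ws k ∘ Equiv.swap i j) atTop (𝓝 (w ∘ Equiv.swap i j)) := by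
    rw [tendsto_pi_nhds] at hws ⊢
    exact fun m => hws _
  refine (sub2_le_liminf ipV θ x y _ t ht ht0 _ hws').trans ?_
  refine liminf_le_of_le (by isBoundedDefault) fun b hb => ?_
  obtain ⟨k, hk⟩ := hb.exists
  rw [sdq2_swap hsym x y i j hx hy] at hk
  exact hk.trans (hlt k).le

lemma sub2_swap {n : ℕ} {θ : (Fin n → ℝ) → EReal} (hsym : SymmetricFn θ) (x y : Fin n → ℝ)
    (i j : Fin n) (hx : x i = x j) (hy : y i = y j) (w : Fin n → ℝ) :
    subderiv2 ipV θ x y (w ∘ Equiv.swap i j) = subderiv2 ipV θ x y w := by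
  refine le_antisymm (sub2_swap_le hsym x y i j hx hy w) ?_
  have h := sub2_swap_le hsym x y i j hx hy (w ∘ Equiv.swap i j)
  have e : (w ∘ Equiv.swap i j) ∘ Equiv.swap i j = w := by
    funext k; simp [Function.comp]
  rwa [e] at h

lemma mkAlg {n : ℕ} {θ : (Fin n → ℝ) → EReal} (hsym : SymmetricFn θ) {X Y : Sym n}
    (hprox : ProxSubgrad ipM (specFn θ) X Y) {x y : Fin n → ℝ} {U : Matrix (Fin n) (Fin n) ℝ}
    (hF : Fr X Y x y U) (hq : IsGQF ipV (subderiv2 ipV θ x y)) :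
    ∃ L, Alg x y (fun w => subderiv2 ipV θ x y w ≠ ⊤) L ∧
      ∀ w, subderiv2 ipV θ x y w ≠ ⊤ → subderiv2 ipV θ x y w = ((ipV (L w) w : ℝ) : EReal) := by
  obtain ⟨h0, hadd, hsmul, L, Ladd, Lsmul, Lsym, Lq⟩ := hq
  refine ⟨L, ⟨h0, hadd, hsmul, Ladd, Lsmul, Lsym, ?_, ?_⟩, Lq⟩
  · intro w i j hw hx hy
    have h1 := lemC_swap hsym hprox hF w (by rw [claim2 hsym hprox hF]; exact hw) i j hx
    have h2 := lemC_swap hsym hprox hF ((-1 : ℝ) • w)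
      (by rw [claim2 hsym hprox hF]; exact hsmul _ _ hw) i j hx
    simp only [Pi.smul_apply, smul_eq_mul] at h2
    have h3 : (y i - y j) * (w i - w j) = 0 := by linarith
    rcases mul_eq_zero.mp h3 with h | h
    · exact absurd (sub_eq_zero.mp h) hy
    · exact sub_eq_zero.mp h
  · intro w i j hw hx hy
    have e := sub2_swap hsym x y i j hx hy w
    have hs : subderiv2 ipV θ x y (w ∘ Equiv.swap i j) ≠ ⊤ := by rw [e]; exact hw
    refine ⟨hs, ?_⟩
    have e1 := Lq _ hs
    rw [e, Lq _ hw] at e1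
    exact_mod_cast e1.symm

def DH {n : ℕ} (x : Fin n → ℝ) (S : (Fin n → ℝ) → Prop) (Fs : ℝ → Prop)
    (A : Matrix (Fin n) (Fin n) ℝ) : Prop :=
  S (fun i => A i i) ∧ ∀ i j, i ≠ j → x i = x j → ¬ Fs (x i) → A i j = 0

def mk {n : ℕ} (x y : Fin n → ℝ) (γ : ℝ → ℝ) (i j : Fin n) : ℝ :=
  if x i = x j then γ (x i) else (y j - y i) / (x j - x i)

def FF {n : ℕ} (x y : Fin n → ℝ) (L : (Fin n → ℝ) → (Fin n → ℝ)) (γ : ℝ → ℝ)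
    (A : Matrix (Fin n) (Fin n) ℝ) : ℝ :=
  ipV (L (fun i => A i i)) (fun i => A i i) - ∑ i, γ (x i) * A i i ^ 2
    + ∑ i, ∑ j, mk x y γ i j * A i j ^ 2

lemma conj_entry {n : ℕ} (M P : Matrix (Fin n) (Fin n) ℝ) (i j : Fin n) :
    (M * P * Mᵀ) i j = ∑ k, ∑ l, M i k * P k l * M j l := by
  rw [Matrix.mul_apply]
  simp only [Matrix.mul_apply, Matrix.transpose_apply, Finset.sum_mul]
  exact Finset.sum_comm

lemma conj_block {n : ℕ} (x c : Fin n → ℝ) (M P : Matrix (Fin n) (Fin n) ℝ) (hM : M * Mᵀ = 1)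
    (hx : ∀ i j, M i j ≠ 0 → x i = x j) (i j : Fin n) (hij : x i = x j)
    (hc : ∀ k, x k = x i → c k = c i)
    (hP : ∀ k l, x k = x i → x l = x i → P k l = if k = l then c k else 0) :
    (M * P * Mᵀ) i j = if i = j then c i else 0 := by
  rw [conj_entry]
  have e : ∀ k l, M i k * P k l * M j l = if k = l then c i * (M i k * M j k) else 0 := by
    intro k l
    by_cases h1 : M i k = 0
    · simp [h1]
    by_cases h2 : M j l = 0
    · rw [h2]; split_ifs with h
      · rw [h, h2]; ring
      · ring
    have hk := (hx i k h1).symm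
    have hl := (hx j l h2).symm.trans hij.symm
    rw [hP k l hk hl, hc k hk]
    split_ifs with h
    · rw [h]; ring
    · ring
  simp only [e, Finset.sum_ite_eq, Finset.mem_univ, if_true]
  rw [← Finset.mul_sum]
  have h := congrFun (congrFun hM i) j
  rw [Matrix.mul_apply] at h
  simp only [Matrix.transpose_apply] at h
  rw [h, Matrix.one_apply]
  split_ifs <;> simp

lemma comm_diag {n : ℕ} (f : Fin n → ℝ) (M : Matrix (Fin n) (Fin n) ℝ)
    (hx : ∀ i j, M i j ≠ 0 → f i = f j) : diagonal f * M = M * diagonal f := by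
  ext i j
  rw [Matrix.diagonal_mul, Matrix.mul_diagonal]
  by_cases h : M i j = 0
  · simp [h]
  · rw [hx i j h]; ring

lemma of_comm_diag {n : ℕ} (f : Fin n → ℝ) (M : Matrix (Fin n) (Fin n) ℝ)
    (h : diagonal f * M = M * diagonal f) : ∀ i j, M i j ≠ 0 → f i = f j := by
  intro i j hij
  have e := congrFun (congrFun h i) j
  rw [Matrix.diagonal_mul, Matrix.mul_diagonal, mul_comm] at e
  exact mul_left_cancel₀ hij e

lemma mask_inv {n : ℕ} (m : Fin n → Fin n → ℝ) (M P A : Matrix (Fin n) (Fin n) ℝ)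
    (hM : M * Mᵀ = 1) (hA : A = M * P * Mᵀ)
    (hm : ∀ i j k l, M i k ≠ 0 → M j l ≠ 0 → m i j = m k l) :
    ∑ i, ∑ j, m i j * A i j ^ 2 = ∑ i, ∑ j, m i j * P i j ^ 2 := by
  have tr : ∀ B : Matrix (Fin n) (Fin n) ℝ, ∑ i, ∑ j, m i j * B i j ^ 2
      = ((Matrix.of fun i j => m i j * B i j) * Bᵀ).trace := by
    intro B
    rw [trace_mul_eq]
    refine Finset.sum_congr rfl fun i _ => Finset.sum_congr rfl fun j _ => ?_
    simp only [Matrix.of_apply, Matrix.transpose_apply]; ring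
  have e : (Matrix.of fun i j => m i j * A i j) = M * (Matrix.of fun i j => m i j * P i j) * Mᵀ := by
    ext i j
    rw [conj_entry, Matrix.of_apply, hA, conj_entry, Finset.mul_sum]
    refine Finset.sum_congr rfl fun k _ => ?_
    rw [Finset.mul_sum]
    refine Finset.sum_congr rfl fun l _ => ?_
    rw [Matrix.of_apply]
    by_cases h1 : M i k = 0
    · simp [h1]
    by_cases h2 : M j l = 0
    · simp [h2]
    rw [hm i j k l h1 h2]; ring
  rw [tr A, tr P, e]
  have hA' : Aᵀ = M * Pᵀ * Mᵀ := by
    rw [hA]; simp [Matrix.transpose_mul, mul_assoc]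
  have hM' := orth_comm hM
  rw [hA']
  set W := (Matrix.of fun i j => m i j * P i j)
  calc (M * W * Mᵀ * (M * Pᵀ * Mᵀ)).trace = (M * (W * (Mᵀ * M) * Pᵀ * Mᵀ)).trace := by
        simp only [mul_assoc]
    _ = (W * (Mᵀ * M) * Pᵀ * Mᵀ * M).trace := Matrix.trace_mul_comm _ _
    _ = (W * (Mᵀ * M) * Pᵀ * (Mᵀ * M)).trace := by simp only [mul_assoc]
    _ = _ := by rw [hM', mul_one, mul_one]

lemma block_sums {n : ℕ} (x : Fin n → ℝ) (M P A : Matrix (Fin n) (Fin n) ℝ)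
    (hM : M * Mᵀ = 1) (hA : A = M * P * Mᵀ) (hx : ∀ i j, M i j ≠ 0 → x i = x j) (β : ℝ → ℝ) :
    ∑ i, β (x i) * A i i = ∑ i, β (x i) * P i i := by
  have hc := comm_diag (fun i => β (x i)) M (fun i j h => by rw [hx i j h])
  have e1 := trace_diag_mul (fun i => β (x i)) A
  have e2 := trace_diag_mul (fun i => β (x i)) P
  have hM' := orth_comm hM
  rw [← e1, ← e2, hA]
  calc (diagonal (fun i => β (x i)) * (M * P * Mᵀ)).trace
      = ((diagonal (fun i => β (x i)) * M) * (P * Mᵀ)).trace := by simp only [mul_assoc]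
    _ = (M * (diagonal (fun i => β (x i)) * (P * Mᵀ))).trace := by rw [hc]; simp only [mul_assoc]
    _ = (diagonal (fun i => β (x i)) * (P * Mᵀ) * M).trace := Matrix.trace_mul_comm _ _
    _ = (diagonal (fun i => β (x i)) * P * (Mᵀ * M)).trace := by simp only [mul_assoc]
    _ = _ := by rw [hM', mul_one]

lemma FF_block {n : ℕ} (x y w : Fin n → ℝ) (γ : ℝ → ℝ) (P : Matrix (Fin n) (Fin n) ℝ)
    (hb : BlockDiag x w P) :
    ∑ i, ∑ j, mk x y γ i j * P i j ^ 2 = quadF x y P + ∑ i, γ (x i) * w i ^ 2 := by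
  unfold quadF
  have e : ∑ i, γ (x i) * w i ^ 2 = ∑ i, ∑ j, if i = j then γ (x i) * w i ^ 2 else 0 := by
    simp
  rw [e, ← Finset.sum_add_distrib]
  refine Finset.sum_congr rfl fun i _ => ?_
  rw [← Finset.sum_add_distrib]
  refine Finset.sum_congr rfl fun j _ => ?_
  unfold mk
  by_cases h : x i = x j
  · rw [if_pos h, hb i j h, h, sub_self, div_zero]
    split_ifs <;> simp
  · have : i ≠ j := fun e => h (by rw [e])
    rw [if_neg h, if_neg this, add_zero]

lemma frame {n : ℕ} {X Y : Sym n} {x y : Fin n → ℝ} {U : Matrix (Fin n) (Fin n) ℝ}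
    {S : (Fin n → ℝ) → Prop} {L : (Fin n → ℝ) → (Fin n → ℝ)} {Fs : ℝ → Prop} {γ : ℝ → ℝ}
    (hA2 : Alg2 x y S L Fs γ)
    (hF : Fr X Y x y U) (Q : Matrix (Fin n) (Fin n) ℝ) (hQ : Q * Qᵀ = 1)
    (hXQ : X.val = Q * diagonal x * Qᵀ) (w : Fin n → ℝ) (H : Sym n)
    (hb : BlockDiag x w (hat Q H)) :
    (S w ↔ DH x S Fs (hat U H)) ∧
    (S w → ∃ Q', Fr X Y x y Q' ∧ BlockDiag x w (hat Q' H) ∧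
      ipV (L w) w + quadF x y (hat Q' H) = FF x y L γ (hat U H)) := by
  obtain ⟨hU, hXU, hYU⟩ := hF
  set M := Uᵀ * Q with hMdef
  have hM : M * Mᵀ = 1 := orth_mul hU hQ
  have hM' : Mᵀ * M = 1 := orth_comm hM
  have hU' : Uᵀ * U = 1 := orth_comm hU
  have hQ' : Qᵀ * Q = 1 := orth_comm hQ
  set A := hat U H with hAdef
  set P := hat Q H with hPdef
  have hAP : A = M * P * Mᵀ := by
    rw [hAdef, hMdef, hat, ← cj_hat hQ H, ← hPdef]
    simp [Matrix.transpose_mul, mul_assoc]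
  have hPA : P = Mᵀ * A * Mᵀᵀ := by
    rw [hAP, Matrix.transpose_transpose]
    calc P = (Mᵀ * M) * P * (Mᵀ * M) := by rw [hM', one_mul, mul_one]
      _ = _ := by simp only [mul_assoc]
  have hMx : ∀ i j, M i j ≠ 0 → x i = x j := by
    apply of_comm_diag
    have e : U * diagonal x * Uᵀ = Q * diagonal x * Qᵀ := hXU.symm.trans hXQ
    calc diagonal x * M = Uᵀ * (U * diagonal x * Uᵀ) * Q := by
          calc _ = 1 * diagonal x * (Uᵀ * Q) := by rw [one_mul]
            _ = _ := by rw [← hU']; simp only [mul_assoc]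
      _ = Uᵀ * (Q * diagonal x * Qᵀ) * Q := by rw [e]
      _ = M * diagonal x * (Qᵀ * Q) := by rw [hMdef]; simp only [mul_assoc]
      _ = _ := by rw [hQ', mul_one]
  have hMtx : ∀ i j, Mᵀ i j ≠ 0 → x i = x j := fun i j h => (hMx j i h).symm
  have hPw : ∀ i, P i i = w i := fun i => by rw [hb i i rfl, if_pos rfl]
  have hsum : ∀ β : ℝ → ℝ, ∑ i, β (x i) * A i i = ∑ i, β (x i) * w i := by
    intro β
    rw [block_sums x M P A hM hAP hMx β]
    simp only [hPw]
  -- nonfree blocks from `S w`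
  have hN : S w → ∀ i j, ¬ Fs (x i) → x i = x j → A i j = if i = j then w i else 0 := by
    intro hw i j hi hij
    rw [hAP]
    refine conj_block x w M P hM hMx i j hij (fun k hk => ?_) (fun k l hk hl => ?_)
    · exact (hA2.f3 w i k hw hi hk.symm).symm
    · exact hb k l (hk.trans hl.symm)
  have tr : S w → S (fun i => A i i) ∧ ipV (L fun i => A i i) (fun i => A i i) - ∑ i, γ (x i) * A i i ^ 2
      = ipV (L w) w - ∑ i, γ (x i) * w i ^ 2 := fun hw =>
    hA2.transfer w (fun i => A i i) hw hsum (fun i hi => by rw [hN hw i i hi rfl, if_pos rfl])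
  refine ⟨⟨fun hw => ⟨(tr hw).1, fun i j hij hx hi => ?_⟩, fun hd => ?_⟩, fun hw => ?_⟩
  · rw [hN hw i j hi hx, if_neg hij]
  · refine (hA2.transfer (fun i => A i i) w hd.1 (fun β => (hsum β).symm) (fun i hi => ?_)).1
    rw [← hPw, hPA, conj_block x (fun i => A i i) Mᵀ A (by rw [Matrix.transpose_transpose]; exact hM')
      hMtx i i rfl (fun k hk => ?_) (fun k l hk hl => ?_), if_pos rfl]
    · exact (hA2.f3 (fun i => A i i) i k hd.1 hi hk.symm).symm
    · split_ifs with h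
      · rw [h]
      · exact hd.2 k l h (hk.trans hl.symm) (by rw [hk]; exact hi)
  · classical
    set N : Matrix (Fin n) (Fin n) ℝ := Matrix.of fun i j =>
      if Fs (x i) then M i j else (1 : Matrix (Fin n) (Fin n) ℝ) i j with hNdef
    have Nrow : ∀ i j, N i j = if Fs (x i) then M i j else (1 : Matrix (Fin n) (Fin n) ℝ) i j :=
      fun i j => rfl
    have hNx : ∀ i j, N i j ≠ 0 → x i = x j := by
      intro i j h
      rw [Nrow] at h
      split_ifs at h with hf
      · exact hMx i j h
      · have : i = j := by
          by_contra hne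
          exact h (Matrix.one_apply_ne hne)
        rw [this]
    have hNy : ∀ i j, N i j ≠ 0 → y i = y j := by
      intro i j h
      have hx := hNx i j h
      rw [Nrow] at h
      split_ifs at h with hf
      · exact hA2.f2 i j hf hx
      · have : i = j := by
          by_contra hne
          exact h (Matrix.one_apply_ne hne)
        rw [this]
    have Ncol : ∀ i j, N i j = if Fs (x j) then M i j else (1 : Matrix (Fin n) (Fin n) ℝ) i j := by
      intro i j
      rw [Nrow]
      by_cases hx : x i = x j
      · rw [hx]
      · have h1 : M i j = 0 := by
          by_contra h; exact hx (hMx i j h)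
        have h2 : (1 : Matrix (Fin n) (Fin n) ℝ) i j = 0 :=
          Matrix.one_apply_ne fun h => hx (by rw [h])
        rw [h1, h2]; simp
    have hNN : N * Nᵀ = 1 := by
      ext i j
      rw [Matrix.mul_apply]
      simp only [Matrix.transpose_apply, Nrow]
      by_cases hi : Fs (x i)
      · by_cases hj : Fs (x j)
        · simp only [if_pos hi, if_pos hj]
          have := congrFun (congrFun hM i) j
          rw [Matrix.mul_apply] at this
          exact this
        · simp only [if_pos hi, if_neg hj, Matrix.one_apply]
          have hx : x i ≠ x j := fun h => hj (h ▸ hi)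
          have h1 : M i j = 0 := by
            by_contra h; exact hx (hMx i j h)
          have h2 : i ≠ j := fun h => hx (by rw [h])
          simp [h1, h2]
      · by_cases hj : Fs (x j)
        · simp only [if_neg hi, if_pos hj, Matrix.one_apply]
          have hx : x j ≠ x i := fun h => hi (h ▸ hj)
          have h1 : M j i = 0 := by
            by_contra h; exact hx (hMx j i h)
          have h2 : i ≠ j := fun h => hx (by rw [h])
          simp [h1, h2]
        · simp only [if_neg hi, if_neg hj, Matrix.one_apply]
          simp
    have hNN' := orth_comm hNN
    have cd : ∀ f : Fin n → ℝ, (∀ i j, N i j ≠ 0 → f i = f j) →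
        U * diagonal f * Uᵀ = (U * N) * diagonal f * (U * N)ᵀ := by
      intro f hf
      have := comm_diag f N hf
      calc U * diagonal f * Uᵀ = U * (diagonal f * (N * Nᵀ)) * Uᵀ := by rw [hNN, mul_one]
        _ = U * (diagonal f * N * Nᵀ) * Uᵀ := by simp only [mul_assoc]
        _ = U * (N * diagonal f * Nᵀ) * Uᵀ := by rw [this]
        _ = _ := by simp [Matrix.transpose_mul, mul_assoc]
    have hhat : hat (U * N) H = Nᵀ * A * N := by
      rw [hAdef]; unfold hat; simp [Matrix.transpose_mul, mul_assoc]
    have hAN : A = N * hat (U * N) H * Nᵀ := by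
      rw [hhat]
      calc A = (N * Nᵀ) * A * (N * Nᵀ) := by rw [hNN, one_mul, mul_one]
        _ = _ := by simp only [mul_assoc]
    have hbN : BlockDiag x w (hat (U * N) H) := by
      intro i j hij
      have e : hat (U * N) H i j = ∑ k, ∑ l, N k i * A k l * N l j := by
        have := conj_entry Nᵀ A i j
        rw [Matrix.transpose_transpose] at this
        rw [hhat, this]; rfl
      by_cases hi : Fs (x i)
      · have hj : Fs (x j) := hij ▸ hi
        have e2 := conj_entry Mᵀ A i j
        rw [← hPA] at e2
        rw [e, ← hb i j hij, e2]
        refine Finset.sum_congr rfl fun k _ => Finset.sum_congr rfl fun l _ => ?_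
        rw [Ncol, Ncol, if_pos hi, if_pos hj]; rfl
      · have hj : ¬ Fs (x j) := hij ▸ hi
        rw [← hN hw i j hi hij, e]
        simp only [Ncol, if_neg hi, if_neg hj, Matrix.one_apply]
        simp
    refine ⟨U * N, ⟨?_, ?_, ?_⟩, hbN, ?_⟩
    · rw [Matrix.transpose_mul]
      calc U * N * (Nᵀ * Uᵀ) = U * (N * Nᵀ) * Uᵀ := by simp only [mul_assoc]
        _ = 1 := by rw [hNN, mul_one, hU]
    · rw [hXU]; exact cd x hNx
    · rw [hYU]; exact cd y hNy
    · have e1 := mask_inv (mk x y γ) N (hat (U * N) H) A hNN hAN (by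
        intro i j k l h1 h2
        unfold mk
        rw [hNx i k h1, hNx j l h2, hNy i k h1, hNy j l h2])
      unfold FF
      rw [(tr hw).2, e1, FF_block x y w γ _ hbN]
      ring

lemma low_lim {n : ℕ} {θ : (Fin n → ℝ) → EReal} (x y w : Fin n → ℝ) (t : ℕ → ℝ) (ht : ∀ k, 0 < t k)
    (ht0 : Tendsto t atTop (𝓝 0)) (ws : ℕ → Fin n → ℝ) (hws : Tendsto ws atTop (𝓝 w))
    (ℓ : ℕ → ℝ) (l : ℝ) (hℓ : Tendsto ℓ atTop (𝓝 l)) (a : EReal)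
    (h : ∀ k, sdq2 ipV θ x y (t k) (ws k) + (ℓ k : EReal) ≤ a) :
    subderiv2 ipV θ x y w ≤ a + ((-l : ℝ) : EReal) := by
  refine (sub2_le_liminf ipV θ x y w t ht ht0 ws hws).trans ?_
  have hT := tendsto_add_real (fun _ => a) a tendsto_const_nhds (fun k => - ℓ k) (-l) hℓ.neg
  rw [← hT.liminf_eq]
  refine Filter.liminf_le_liminf (Eventually.of_forall fun k => ?_) (by isBoundedDefault)
    (by isBoundedDefault)
  exact le_sub_real _ _ _ (h k)

lemma add_le_of_le_sub (q l : ℝ) (a : EReal) (h : (q : EReal) ≤ a + ((-l : ℝ) : EReal)) :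
    ((q + l : ℝ) : EReal) ≤ a := by
  induction a with
  | bot => simp at h
  | top => exact le_top
  | coe a =>
    rw [← EReal.coe_add, EReal.coe_le_coe_iff] at h
    rw [EReal.coe_le_coe_iff]; linarith

lemma ipV_tendsto {n : ℕ} {ws : ℕ → Fin n → ℝ} {w : Fin n → ℝ} (h : Tendsto ws atTop (𝓝 w)) :
    Tendsto (fun k => ipV (ws k) (ws k)) atTop (𝓝 (ipV w w)) := by
  have hc : Continuous (fun w : Fin n → ℝ => ipV w w) := by unfold ipV; fun_prop
  exact (hc.tendsto w).comp h

section
variable {n : ℕ} {θ : (Fin n → ℝ) → EReal} {X Y : Sym n} {x y : Fin n → ℝ}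
  {U : Matrix (Fin n) (Fin n) ℝ} {L : (Fin n → ℝ) → (Fin n → ℝ)} {Fs : ℝ → Prop} {γ : ℝ → ℝ}

lemma lower_g (hsym : SymmetricFn θ) (hprox : ProxSubgrad ipM (specFn θ) X Y)
    (hF : Fr X Y x y U) (hA : Alg2 x y (fun w => subderiv2 ipV θ x y w ≠ ⊤) L Fs γ)
    (hL : ∀ w, subderiv2 ipV θ x y w ≠ ⊤ → subderiv2 ipV θ x y w = ((ipV (L w) w : ℝ) : EReal))
    (H : Sym n) (a : EReal) (ha : subderiv2 ipM (specFn θ) X Y H < a) (hat' : a < ⊤) :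
    DH x (fun w => subderiv2 ipV θ x y w ≠ ⊤) Fs (hat U H) ∧
      ((FF x y L γ (hat U H) : ℝ) : EReal) ≤ a := by
  obtain ⟨t, Hs, ht, ht0, hHs, hlt⟩ := sub2_seq _ _ _ _ _ _ ha
  obtain ⟨σ, hσ, hσ2⟩ := exists_sort x y 0 (by simp)
  obtain ⟨c, -, hc⟩ := exists_large x y σ hσ (fun i j hij h => (hσ2 i j hij h).1)
  have hv := hc c le_rfl
  obtain ⟨φ, Qs, ws, Q, w, hφ, hQs, hZ, hd, hws, hQ, hXQ, hb⟩ :=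
    struct hF σ hσ t ht ht0 Hs H hHs
  have ht' : ∀ k, 0 < t (φ k) := fun k => ht _
  have ht0' : Tendsto (fun k => t (φ k)) atTop (𝓝 0) := ht0.comp hφ.tendsto_atTop
  have hHs' : Tendsto (fun k => Hs (φ k)) atTop (𝓝 H) := hHs.comp hφ.tendsto_atTop
  have hrel : ∀ k, sdq2 ipM (specFn θ) X Y (t (φ k)) (Hs (φ k)) = sdq2 ipV θ x y (t (φ k)) (ws k)
      + ((2 / t (φ k) * (ipV y (ws k) - ipM Y (Hs (φ k))) : ℝ) : EReal) := fun k =>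
    sdq2_rel hsym X Y x y hprox.1 (fr_spec hsym hF) _ (ht _) _ _ (Qs k) (hQs k) (hZ k)
  have hle : ∀ ℓ : ℕ → ℝ, (∀ k, ℓ k ≤ 2 / t (φ k) * (ipV y (ws k) - ipM Y (Hs (φ k)))) →
      ∀ k, sdq2 ipV θ x y (t (φ k)) (ws k) + (ℓ k : EReal) ≤ a := by
    intro ℓ hℓ k
    refine le_trans ?_ (hlt (φ k)).le
    rw [hrel]
    gcongr
    exact_mod_cast hℓ k
  have hSw : subderiv2 ipV θ x y w ≠ ⊤ := by
    have hl : Tendsto (fun k => c * (ipV (ws k) (ws k) - ipM (Hs (φ k)) (Hs (φ k)))) atTop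
        (𝓝 (c * (ipV w w - ipM H H))) :=
      ((ipV_tendsto hws).sub (ipM_tendsto hHs' hHs')).const_mul c
    have h := low_lim x y w _ ht' ht0' ws hws _ _ hl a
      (hle _ fun k => crude hF σ c hv _ (ht _) _ (Qs k) (ws k) (hQs k) (hZ k) (hd k))
    exact (lt_of_le_of_lt h (EReal.add_lt_top hat'.ne (EReal.coe_ne_top _))).ne
  obtain ⟨hiff, hfr⟩ := frame hA hF Q hQ hXQ w H hb
  refine ⟨hiff.mp hSw, ?_⟩
  obtain ⟨Q', hF', hb', hFF⟩ := hfr hSw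
  obtain ⟨ℓ, hℓ, hℓle⟩ := core_lower x y w c σ hv (hat Q' H) (hat_symm _ _) hb' _ ht' ht0'
    (fun k => hat Q' (Hs (φ k))) (fun k => Q'ᵀ * Qs k) ws
    (((hat_continuous Q').tendsto H).comp hHs') hws (fun k => orth_mul hF'.1 (hQs k))
    (fun k => hat_conj_frame hF' _ _ _ _ (hZ k)) hd
  have h := low_lim x y w _ ht' ht0' ws hws _ _ hℓ a (hle _ fun k => by
    rw [ip_frame Q' Y y hF'.2.2]; exact hℓle k)
  rw [hL w hSw] at h
  rw [← hFF]
  exact add_le_of_le_sub _ _ _ h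

lemma recov_g (hsym : SymmetricFn θ) (hprox : ProxSubgrad ipM (specFn θ) X Y)
    (hF : Fr X Y x y U) (hA : Alg2 x y (fun w => subderiv2 ipV θ x y w ≠ ⊤) L Fs γ)
    (hL : ∀ w, subderiv2 ipV θ x y w ≠ ⊤ → subderiv2 ipV θ x y w = ((ipV (L w) w : ℝ) : EReal))
    (hepi : TwiceEpiDiff ipV θ x y)
    (H : Sym n) (hD : DH x (fun w => subderiv2 ipV θ x y w ≠ ⊤) Fs (hat U H))
    (t : ℕ → ℝ) (ht : ∀ k, 0 < t k) (ht0 : Tendsto t atTop (𝓝 0)) :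
    ∃ Hs : ℕ → Sym n, Tendsto Hs atTop (𝓝 H) ∧
      Tendsto (fun k => sdq2 ipM (specFn θ) X Y (t k) (Hs k)) atTop
        (𝓝 ((FF x y L γ (hat U H) : ℝ) : EReal)) := by
  obtain ⟨σ, hσ, -⟩ := exists_sort x y 0 (by simp)
  obtain ⟨φ, -, -, Q, w, -, -, -, -, -, hQ, hXQ, hb⟩ :=
    struct hF σ hσ t ht ht0 (fun _ => H) H tendsto_const_nhds
  obtain ⟨hiff, hfr⟩ := frame hA hF Q hQ hXQ w H hb
  have hSw := hiff.mpr hD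
  obtain ⟨Q', hF', hb', hFF⟩ := hfr hSw
  obtain ⟨ws, hws, hlim⟩ := hepi.2 t ht ht0 w
  obtain ⟨Ks, R, hKs, hR, hKR, hgap⟩ := core_recovery x y w (hat Q' H) (hat_symm _ _) hb' t ht ht0 ws hws
  have hKsym : ∀ k, (Ks k)ᵀ = Ks k := by
    intro k
    have e : t k • Ks k = R k * diagonal (x + t k • ws k) * (R k)ᵀ - diagonal x := by
      rw [← hKR k]; simp
    have e2 : t k • (Ks k)ᵀ = t k • Ks k := by
      rw [← Matrix.transpose_smul, e, Matrix.transpose_sub, conj_symm _ _ (diagonal_transpose _),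
        diagonal_transpose]
    have := congrArg (fun A => (t k)⁻¹ • A) e2
    simpa only [smul_smul, inv_mul_cancel₀ (ht k).ne', one_smul] using this
  refine ⟨fun k => cj Q' (Ks k) (hKsym k), ?_, ?_⟩
  · rw [tendsto_subtype_rng]
    have h1 := (hKs.const_mul Q').mul_const Q'ᵀ
    rw [cj_hat hF'.1] at h1
    exact h1
  · have hrel : ∀ k, sdq2 ipM (specFn θ) X Y (t k) (cj Q' (Ks k) (hKsym k))
        = sdq2 ipV θ x y (t k) (ws k)
          + ((2 / t k * (∑ i, y i * ws k i - ∑ i, y i * Ks k i i) : ℝ) : EReal) := by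
      intro k
      rw [sdq2_rel hsym X Y x y hprox.1 (fr_spec hsym hF) (t k) (ht k) _ (ws k) (Q' * R k),
        ip_frame Q' Y y hF'.2.2, hat_cj hF'.1]
      · rfl
      · rw [Matrix.transpose_mul]
        calc Q' * R k * ((R k)ᵀ * Q'ᵀ) = Q' * (R k * (R k)ᵀ) * Q'ᵀ := by simp only [mul_assoc]
          _ = 1 := by rw [hR, mul_one, hF'.1]
      · rw [Submodule.coe_add, Submodule.coe_smul, hF'.2.1]
        change Q' * diagonal x * Q'ᵀ + t k • (Q' * Ks k * Q'ᵀ) = _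
        calc _ = Q' * (diagonal x + t k • Ks k) * Q'ᵀ := by
              simp only [mul_add, add_mul, mul_smul_comm, smul_mul_assoc]
          _ = _ := by rw [hKR]; simp [Matrix.transpose_mul, mul_assoc]
    simp only [hrel]
    have := tendsto_add_real _ _ hlim _ _ hgap
    rw [hL w hSw, ← EReal.coe_add, hFF] at this
    exact this

lemma sub2_g (hsym : SymmetricFn θ) (hprox : ProxSubgrad ipM (specFn θ) X Y)
    (hF : Fr X Y x y U) (hA : Alg2 x y (fun w => subderiv2 ipV θ x y w ≠ ⊤) L Fs γ)
    (hL : ∀ w, subderiv2 ipV θ x y w ≠ ⊤ → subderiv2 ipV θ x y w = ((ipV (L w) w : ℝ) : EReal))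
    (hepi : TwiceEpiDiff ipV θ x y) (H : Sym n) :
    (subderiv2 ipM (specFn θ) X Y H ≠ ⊤ ↔
      DH x (fun w => subderiv2 ipV θ x y w ≠ ⊤) Fs (hat U H)) ∧
    (subderiv2 ipM (specFn θ) X Y H ≠ ⊤ →
      subderiv2 ipM (specFn θ) X Y H = ((FF x y L γ (hat U H) : ℝ) : EReal)) := by
  have hup : DH x (fun w => subderiv2 ipV θ x y w ≠ ⊤) Fs (hat U H) →
      subderiv2 ipM (specFn θ) X Y H ≤ ((FF x y L γ (hat U H) : ℝ) : EReal) := by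
    intro hD
    have ht : ∀ k : ℕ, (0 : ℝ) < 1 / ((k : ℝ) + 1) := fun k => by positivity
    have ht0 : Tendsto (fun k : ℕ => 1 / ((k : ℝ) + 1)) atTop (𝓝 0) :=
      tendsto_one_div_add_atTop_nhds_zero_nat
    obtain ⟨Hs, hHs, hlim⟩ := recov_g hsym hprox hF hA hL hepi H hD _ ht ht0
    exact sub2_le_of_tendsto _ _ _ _ _ _ ht ht0 Hs hHs _ hlim
  have hdn : subderiv2 ipM (specFn θ) X Y H ≠ ⊤ →
      DH x (fun w => subderiv2 ipV θ x y w ≠ ⊤) Fs (hat U H) := by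
    intro h
    obtain ⟨a, h1, h2⟩ := exists_between (lt_top_iff_ne_top.mpr h)
    exact (lower_g hsym hprox hF hA hL H a h1 h2).1
  refine ⟨⟨hdn, fun hD => ((hup hD).trans_lt (EReal.coe_lt_top _)).ne⟩, fun h => ?_⟩
  refine le_antisymm (hup (hdn h)) (le_of_forall_gt_imp_ge_of_dense fun a ha => ?_)
  rcases eq_or_lt_of_le (le_top (a := a)) with h2 | h2
  · rw [h2]; exact le_top
  · exact (lower_g hsym hprox hF hA hL H a ha h2).2

/-- The matrix (in the frame `U`) representing the operator of the second subderivative of `g`. -/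
def Lmat (x y : Fin n → ℝ) (L : (Fin n → ℝ) → (Fin n → ℝ)) (γ : ℝ → ℝ)
    (A : Matrix (Fin n) (Fin n) ℝ) : Matrix (Fin n) (Fin n) ℝ :=
  diagonal (L (fun i => A i i)) - diagonal (fun i => γ (x i) * A i i)
    + Matrix.of fun i j => mk x y γ i j * A i j

lemma mk_symm (i j : Fin n) : mk x y γ i j = mk x y γ j i := by
  unfold mk
  by_cases h : x i = x j
  · rw [if_pos h, if_pos h.symm, h]
  · rw [if_neg h, if_neg (Ne.symm h), ← neg_sub (y i), ← neg_sub (x i), neg_div_neg_eq]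

lemma Lmat_symm (A : Matrix (Fin n) (Fin n) ℝ) (hA : Aᵀ = A) :
    (Lmat x y L γ A)ᵀ = Lmat x y L γ A := by
  unfold Lmat
  rw [Matrix.transpose_add, Matrix.transpose_sub, diagonal_transpose, diagonal_transpose]
  congr 1
  ext i j
  have := congrFun (congrFun hA i) j
  rw [Matrix.transpose_apply] at this
  rw [Matrix.transpose_apply, Matrix.of_apply, Matrix.of_apply, mk_symm, this]

lemma Lmat_ip (A K : Matrix (Fin n) (Fin n) ℝ) (hK : Kᵀ = K) :
    (Lmat x y L γ A * K).trace = ipV (L (fun i => A i i)) (fun i => K i i)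
      - ∑ i, γ (x i) * A i i * K i i + ∑ i, ∑ j, mk x y γ i j * A i j * K i j := by
  unfold Lmat
  rw [add_mul, sub_mul, Matrix.trace_add, Matrix.trace_sub, trace_diag_mul, trace_diag_mul,
    trace_mul_eq]
  congr 1
  refine Finset.sum_congr rfl fun i _ => Finset.sum_congr rfl fun j _ => ?_
  have := congrFun (congrFun hK i) j
  rw [Matrix.transpose_apply] at this
  rw [this, Matrix.of_apply]

lemma cj_ext (A B : Matrix (Fin n) (Fin n) ℝ) (hA : Aᵀ = A) (hB : Bᵀ = B) (h : A = B) :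
    cj U A hA = cj U B hB := by
  subst h; rfl

theorem dir_theta_to_g (hsym : SymmetricFn θ) (hprox : ProxSubgrad ipM (specFn θ) X Y)
    (hF : Fr X Y x y U) (hθ : GenTwiceDiff ipV θ x y) : GenTwiceDiff ipM (specFn θ) X Y := by
  obtain ⟨hepi, hq⟩ := hθ
  obtain ⟨L, hA1, hL⟩ := mkAlg hsym hprox hF hq
  obtain ⟨Fs, γ, hA⟩ := hA1.alg2
  have hg := sub2_g hsym hprox hF hA hL hepi
  refine ⟨⟨hprox.1, ?_⟩, ?_, ?_, ?_, fun H => cj U (Lmat x y L γ (hat U H))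
    (Lmat_symm _ (hat_symm U H)), ?_, ?_, ?_, ?_⟩
  · intro t ht ht0 H
    by_cases h : subderiv2 ipM (specFn θ) X Y H = ⊤
    · exact tendsto_of_top _ _ _ _ _ h t ht ht0
    · rw [(hg H).2 h]
      exact recov_g hsym hprox hF hA hL hepi H ((hg H).1.mp h) t ht ht0
  · rw [(hg 0).1]
    have : hat U (0 : Sym n) = 0 := by
      have := hat_smul U 0 (0 : Sym n); rwa [zero_smul, zero_smul] at this
    rw [this]
    exact ⟨hA1.zero, fun i j _ _ _ => rfl⟩
  · intro H K hH hK
    rw [(hg _).1] at *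
    rw [hat_add]
    refine ⟨hA1.add _ _ hH.1 hK.1, fun i j h1 h2 h3 => ?_⟩
    rw [Matrix.add_apply, hH.2 i j h1 h2 h3, hK.2 i j h1 h2 h3, add_zero]
  · intro c H hH
    rw [(hg _).1] at *
    rw [hat_smul]
    refine ⟨hA1.smul c _ hH.1, fun i j h1 h2 h3 => ?_⟩
    rw [Matrix.smul_apply, hH.2 i j h1 h2 h3, smul_zero]
  · intro H K hH hK
    rw [(hg _).1] at hH hK
    have e : Lmat x y L γ (hat U (H + K)) = Lmat x y L γ (hat U H) + Lmat x y L γ (hat U K) := by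
      have := hA1.Ladd _ _ hH.1 hK.1
      rw [hat_add]
      unfold Lmat
      rw [show (fun i => (hat U H + hat U K) i i) = (fun i => hat U H i i) + fun i => hat U K i i from rfl,
        this]
      ext i j
      by_cases h : i = j
      · subst h
        simp only [Matrix.add_apply, Matrix.sub_apply, diagonal_apply_eq, Matrix.of_apply, Pi.add_apply]
        ring
      · simp only [Matrix.add_apply, Matrix.sub_apply, diagonal_apply_ne _ h, Matrix.of_apply]
        ring
    apply Subtype.ext
    rw [Submodule.coe_add]
    change U * Lmat x y L γ (hat U (H + K)) * Uᵀ
      = U * Lmat x y L γ (hat U H) * Uᵀ + U * Lmat x y L γ (hat U K) * Uᵀ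
    rw [e, mul_add, add_mul]
  · intro c H hH
    rw [(hg _).1] at hH
    have e : Lmat x y L γ (hat U (c • H)) = c • Lmat x y L γ (hat U H) := by
      have := hA1.Lsmul c _ hH.1
      rw [hat_smul]
      unfold Lmat
      rw [show (fun i => (c • hat U H) i i) = c • (fun i => hat U H i i) from rfl, this]
      ext i j
      by_cases h : i = j
      · subst h
        simp only [Matrix.add_apply, Matrix.sub_apply, Matrix.smul_apply, diagonal_apply_eq,
          Matrix.of_apply, Pi.smul_apply, smul_eq_mul]
        ring
      · simp only [Matrix.add_apply, Matrix.sub_apply, Matrix.smul_apply, diagonal_apply_ne _ h,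
          Matrix.of_apply, smul_eq_mul]
        ring
    apply Subtype.ext
    rw [Submodule.coe_smul]
    change U * Lmat x y L γ (hat U (c • H)) * Uᵀ = c • (U * Lmat x y L γ (hat U H) * Uᵀ)
    rw [e, mul_smul_comm, smul_mul_assoc]
  · intro H K hH hK
    rw [(hg _).1] at hH hK
    rw [ipM_comm H, ipM_sq_hat hF.1, ipM_sq_hat hF.1, hat_cj hF.1, hat_cj hF.1,
      Lmat_ip _ _ (hat_symm U K), Lmat_ip _ _ (hat_symm U H), hA1.Bsymm _ _ hH.1 hK.1]
    congr 1
    · congr 1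
      exact Finset.sum_congr rfl fun i _ => by ring
    · exact Finset.sum_congr rfl fun i _ => Finset.sum_congr rfl fun j _ => by ring
  · intro H hH
    rw [(hg H).2 hH, ipM_sq_hat hF.1, hat_cj hF.1, Lmat_ip _ _ (hat_symm U H)]
    congr 1
    unfold FF
    congr 1
    · congr 1
      exact Finset.sum_congr rfl fun i _ => by ring
    · exact Finset.sum_congr rfl fun i _ => Finset.sum_congr rfl fun j _ => by ring

end

/-- Theorem 4.1: `g` is generalized twice differentiable at `X` for `Y` iff
`θ` is generalized twice differentiable at `λ(X)` for `y`. -/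
theorem gen_twice_diff_spectral {n : ℕ} (θ : (Fin n → ℝ) → EReal)
    (X Y : Sym n) (U : Matrix (Fin n) (Fin n) ℝ) (y : Fin n → ℝ)
    (hsym : SymmetricFn θ) (hLip : LocLipRelDom ipV θ)
    (hprox : ProxSubgrad ipM (specFn θ) X Y)
    (hparab : ∀ U' ∈ eigOrth X.val, ∀ H : Sym n,
      H ∈ tangentCone {A : Sym n | specFn θ A ≠ ⊤} X →
        ParabEpiDiff θ (eigval X.val) (lambdaDir X.val U' H.val))
    (hgreg : SubdiffRegularAt ipM (specFn θ) X)
    (hy : RegSubgrad ipV θ (eigval X.val) y)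
    (hU : U ∈ eigOrth X.val)
    (hYdec : Y.val = U * Matrix.diagonal y * Uᵀ) :
    GenTwiceDiff ipM (specFn θ) X Y ↔ GenTwiceDiff ipV θ (eigval X.val) y := by
  have hF : Fr X Y (eigval X.val) y U := ⟨hU.1, hU.2, hYdec⟩
  exact ⟨dir_g_to_theta hsym hprox hF, dir_theta_to_g hsym hprox hF⟩

end SpecPaper
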